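/- arXiv:2506.14047 — 3 statements merged into one kernel-verified Lean document; each statement's English description precedes it below -/
import Mathlib

section
/- Let X = {a,b} and let G = Gp⟨a,b | a⁻¹b⁻¹ab = 1⟩ be the free abelian group of rank 2. Then the cyclic closure of any non-empty connected subgraph of Cay(G,X) is the whole Cayley graph, and consequently M_{sF}(G,X) ≅ G ∪ {λ}, the group G with an externally adjoined identity element λ (corresponding to the pair (∅,1), where ∅ is the one-vertex graph at 1). -/
/-! Any edge of the grid lies, for each perpendicular letter, on a unit square, which is a simple
cycle. A cyclic subgraph with at least one edge therefore contains all edges at the endpoints of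
that edge (`cyclic_square`, `cyclic_all_at`), hence everything (`cyclic_eq_univ`).

For the isomorphism, the defining relations of `MsF` preserve the value of a word in the group and
separate the empty word from the others (`rel_invariant`), so sending a non-empty word to its value
induces a homomorphism `msfHom` to the group with an adjoined identity. It is injective because of
two consequences of identifying simple paths. If `x`, `y` are perpendicular letters, then `y x y⁻¹`
and `x` are simple paths to the same vertex, so `y y⁻¹ x = x` (`lt_absorb`); by symmetry all the
idempotents `x x⁻¹` coincide in one idempotent `idem`, an identity for all non-empty words. Moreover
`x y = y x`. So the letters act on the elements fixed by `idem` as commuting permutations, opposite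
letters being inverse to each other. This is an action of the free abelian group, by which the class
`w * idem = w` of a non-empty word `w` depends on the value of `w` only (`cls_eq_of_eval`). -/

/-! Common framework: words over a doubled alphabet, inverse monoids,
presentations of inverse monoids as quotients of the free monoid on letters,
the minimum group congruence, F-inverse and strongly F-inverse properties,
and the Margolis-Meakin / M_sF machinery. -/

namespace SFI

/-- A letter of the doubled alphabet X̄ = X ∪ X⁻¹: a generator together with a
polarity (`true` = the generator itself, `false` = its formal inverse). -/
abbrev Letter (X : Type*) := X × Bool

/-- Words over the doubled alphabet X̄, i.e. elements of the free monoid X̄*. -/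
abbrev Word (X : Type*) := FreeMonoid (Letter X)

variable {X : Type*}

/-- The formal inverse of a letter. -/
def invL (a : Letter X) : Letter X := (a.1, !a.2)

theorem invL_invL (a : Letter X) : invL (invL a) = a := by
  cases a; simp [invL]

/-- Formal inversion of a word: reverse the word and invert each letter. -/
def wordInv (w : Word X) : Word X :=
  FreeMonoid.ofList (((FreeMonoid.toList w).reverse).map invL)

theorem wordInv_mul (u v : Word X) : wordInv (u * v) = wordInv v * wordInv u := by
  simp only [wordInv, FreeMonoid.toList_mul, List.reverse_append, List.map_append,
    FreeMonoid.ofList_append]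

theorem wordInv_wordInv (w : Word X) : wordInv (wordInv w) = w := by
  simp only [wordInv, FreeMonoid.toList_ofList, List.map_reverse, List.reverse_reverse,
    List.map_map]
  have : (invL ∘ invL : Letter X → Letter X) = id := funext invL_invL
  rw [this, List.map_id, FreeMonoid.ofList_toList]

/-- Evaluation of a letter in a monoid-with-inversion, along a map `ι` of generators. -/
def evalLetter {M : Type*} [Monoid M] [Inv M] (ι : X → M) (a : Letter X) : M :=
  if a.2 then ι a.1 else (ι a.1)⁻¹

/-- Evaluation of a word in a monoid-with-inversion, along a map `ι` of generators:
`evalWord ι w` is the element `[w]` represented by the word `w`. -/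
def evalWord {M : Type*} [Monoid M] [Inv M] (ι : X → M) (w : Word X) : M :=
  ((FreeMonoid.toList w).map (evalLetter ι)).prod

/-- `M` is `X`-generated via `ι : X → M` if every element of `M` is represented by
some word over the doubled alphabet X̄. -/
def XGen {M : Type*} [Monoid M] [Inv M] (ι : X → M) : Prop :=
  Function.Surjective (evalWord ι)

/-- Inverse monoids, as a variety: a monoid with an involutive anti-automorphism `⁻¹`
such that `a a⁻¹ a = a` and idempotents (elements of the form `a a⁻¹`) commute.
This is equivalent to every element having a unique von Neumann inverse. -/
class InverseMonoid (M : Type*) extends Monoid M, Inv M where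
  mul_inv_rev : ∀ a b : M, (a * b)⁻¹ = b⁻¹ * a⁻¹
  inv_inv : ∀ a : M, a⁻¹⁻¹ = a
  mul_inv_mul : ∀ a : M, a * a⁻¹ * a = a
  idem_mul_comm : ∀ a b : M, a * a⁻¹ * (b * b⁻¹) = b * b⁻¹ * (a * a⁻¹)

/-- The natural partial order of an inverse monoid: `a ≤ b` iff `a = a a⁻¹ b`. -/
def natLe {M : Type*} [Monoid M] [Inv M] (a b : M) : Prop := a = a * a⁻¹ * b

/-- A congruence has group quotient iff every element of the quotient is (two-sided)
invertible. -/
def IsGroupCon {M : Type*} [Monoid M] (c : Con M) : Prop := ∀ x : c.Quotient, IsUnit x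

/-- The minimum group congruence σ of a monoid: the infimum of all congruences whose
quotient is a group.  For an inverse monoid this is the least group congruence, and
the quotient is the maximum group image. -/
def sigmaCon (M : Type*) [Monoid M] : Con M := sInf {c : Con M | IsGroupCon c}

/-- An inverse monoid is F-inverse if every σ-class has a maximum element in the
natural partial order. -/
def FInverse (M : Type*) [InverseMonoid M] : Prop :=
  ∀ a : M, ∃ m : M, sigmaCon M m a ∧ ∀ b : M, sigmaCon M b a → natLe b m

/-- The word obtained from the prefix of length `k` of `w`. -/
def wordPrefix (w : Word X) (k : ℕ) : Word X :=
  FreeMonoid.ofList ((FreeMonoid.toList w).take k)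

/-- `w` labels a simple path starting at `1` in the Cayley graph of the maximum group
image `S/σ` of the inverse monoid `S` (w.r.t. the generating map `ι`): the values of
distinct prefixes of `w` lie in distinct σ-classes, i.e. the vertices visited by the
path are pairwise distinct. -/
def IsSimplePathWordS {S : Type*} [InverseMonoid S] (ι : X → S) (w : Word X) : Prop :=
  ∀ j k : ℕ, j ≤ (FreeMonoid.toList w).length → k ≤ (FreeMonoid.toList w).length →
    sigmaCon S (evalWord ι (wordPrefix w j)) (evalWord ι (wordPrefix w k)) → j = k

/-- An X-generated inverse monoid `S` (via `ι`) is strongly F-inverse: it is F-inverse,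
and the canonical morphism from the Margolis-Meakin expansion `M(S/σ, X)` to `S` sends
all maximal elements of each σ-class of `M(S/σ,X)` (namely, the graphs spanned by simple
paths from 1 to a fixed vertex) to the single maximum element of the corresponding
σ-class of `S`.  Concretely: any two words labelling simple paths from 1 to the same
vertex of the Cayley graph of S/σ represent the same element of `S`, and this element
is the top of its σ-class. -/
def StronglyFInverse {S : Type*} [InverseMonoid S] (ι : X → S) : Prop :=
  XGen ι ∧ FInverse S ∧
    ∀ u v : Word X, IsSimplePathWordS ι u → IsSimplePathWordS ι v →
      sigmaCon S (evalWord ι u) (evalWord ι v) →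
      evalWord ι u = evalWord ι v ∧
        ∀ t : Word X, sigmaCon S (evalWord ι t) (evalWord ι u) →
          natLe (evalWord ι t) (evalWord ι u)

/-! ### Presentations of inverse monoids -/

/-- The generating pairs of the Wagner congruence on X̄*: `(w w⁻¹ w, w)` and
`(u u⁻¹ v v⁻¹, v v⁻¹ u u⁻¹)`. -/
def wagnerRel : Word X → Word X → Prop := fun a b =>
  (∃ w : Word X, a = w * wordInv w * w ∧ b = w) ∨
  (∃ u v : Word X, a = u * wordInv u * (v * wordInv v) ∧ b = v * wordInv v * (u * wordInv u))

/-- The congruence on X̄* generated by the Wagner relations together with the extra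
defining relations `r`; the corresponding quotient is the inverse monoid
`Inv⟨X ∣ r⟩`.  (The relation set is closed under formal inversion; this does not
change the congruence, since any monoid congruence on an inverse monoid automatically
respects inversion, but it makes the inversion on the quotient directly definable.) -/
def presCon (r : Word X → Word X → Prop) : Con (Word X) :=
  conGen (fun u v => (wagnerRel u v ∨ r u v) ∨
    (wagnerRel (wordInv u) (wordInv v) ∨ r (wordInv u) (wordInv v)))

/-- The inverse monoid presented by the defining relations `r` (together with the
Wagner relations), i.e. `Inv⟨X ∣ r⟩`, a quotient of the free inverse monoid FIM(X). -/
def InvPres (r : Word X → Word X → Prop) : Type _ := (presCon r).Quotient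

instance (r : Word X → Word X → Prop) : Monoid (InvPres r) :=
  inferInstanceAs (Monoid (presCon r).Quotient)

theorem presCon_inv {r : Word X → Word X → Prop} {u v : Word X} (h : presCon r u v) :
    presCon r (wordInv u) (wordInv v) := by
  show ConGen.Rel _ (wordInv u) (wordInv v)
  have h' : ConGen.Rel (fun u v => (wagnerRel u v ∨ r u v) ∨
      (wagnerRel (wordInv u) (wordInv v) ∨ r (wordInv u) (wordInv v))) u v := h
  clear h
  induction h' with
  | of a b hab =>
    apply ConGen.Rel.of
    rcases hab with hab | hab
    · exact Or.inr (by rwa [wordInv_wordInv, wordInv_wordInv])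
    · exact Or.inl hab
  | refl a => exact ConGen.Rel.refl _
  | symm _ ih => exact ConGen.Rel.symm ih
  | trans _ _ ih₁ ih₂ => exact ConGen.Rel.trans ih₁ ih₂
  | mul _ _ ih₁ ih₂ => rw [wordInv_mul, wordInv_mul]; exact ConGen.Rel.mul ih₂ ih₁

instance (r : Word X → Word X → Prop) : Inv (InvPres r) :=
  ⟨Quotient.map' wordInv (fun _ _ h => presCon_inv h)⟩

instance (r : Word X → Word X → Prop) : InverseMonoid (InvPres r) where
  mul_inv_rev a b := by
    refine Quotient.inductionOn₂' a b (fun u v => ?_)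
    exact congrArg Quotient.mk'' (wordInv_mul u v)
  inv_inv a := by
    refine Quotient.inductionOn' a (fun u => ?_)
    exact congrArg Quotient.mk'' (wordInv_wordInv u)
  mul_inv_mul a := by
    refine Quotient.inductionOn' a (fun u => ?_)
    exact Quotient.sound' (ConGen.Rel.of _ _ (Or.inl (Or.inl (Or.inl ⟨u, rfl, rfl⟩))))
  idem_mul_comm a b := by
    refine Quotient.inductionOn₂' a b (fun u v => ?_)
    exact Quotient.sound' (ConGen.Rel.of _ _ (Or.inl (Or.inl (Or.inr ⟨u, v, rfl, rfl⟩))))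

/-- The element of `Inv⟨X ∣ r⟩` represented by the word `w`. -/
def mkW (r : Word X → Word X → Prop) (w : Word X) : InvPres r := Quotient.mk'' w

/-- The canonical generating map `X → Inv⟨X ∣ r⟩`. -/
def genMap (r : Word X → Word X → Prop) : X → InvPres r :=
  fun x => mkW r (FreeMonoid.of (x, true))

/-- The defining relation of a special inverse monoid `Inv⟨X ∣ w = 1⟩`. -/
def specialRel (w : Word X) : Word X → Word X → Prop := fun a b => a = w ∧ b = 1

/-- The defining relations of a special inverse monoid `Inv⟨X ∣ wᵢ = 1 (i ∈ I)⟩`. -/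
def familyRel {I : Type*} (w : I → Word X) : Word X → Word X → Prop :=
  fun a b => ∃ i, a = w i ∧ b = 1

/-- The defining relations of an inverse monoid `Inv⟨X ∣ uᵢ = vᵢ (i ∈ I)⟩`. -/
def pairsRel {I : Type*} (p : I → Word X × Word X) : Word X → Word X → Prop :=
  fun a b => ∃ i, a = (p i).1 ∧ b = (p i).2

/-! ### Cayley graphs -/

section Graph

variable {G : Type*} [Monoid G] [Inv G]

/-- The set of (inverse-closed pairs of) edges of the Cayley graph traversed by the
path starting at `g` and labelled by the list of letters `l`; an edge from `h`
labelled by the letter `a` is recorded as the pair `(h, a)`, together with its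
inverse edge `(h·[a], a⁻¹)`. -/
def pathEdges (ιG : X → G) : G → List (Letter X) → Set (G × Letter X)
  | _, [] => ∅
  | g, a :: l =>
      insert (g, a) (insert (g * evalLetter ιG a, invL a)
        (pathEdges ιG (g * evalLetter ιG a) l))

/-- `Γ_w`: the subgraph (set of edges) of the Cayley graph of `G` spanned by the path
starting at `1` labelled by the word `w`. -/
def Gamma (ιG : X → G) (w : Word X) : Set (G × Letter X) :=
  pathEdges ιG 1 (FreeMonoid.toList w)

/-- `w` labels a simple path starting at `1` in the Cayley graph of `G`: the values of
distinct prefixes of `w` are distinct vertices. -/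
def IsSimplePathWordG (ιG : X → G) (w : Word X) : Prop :=
  ∀ j k : ℕ, j ≤ (FreeMonoid.toList w).length → k ≤ (FreeMonoid.toList w).length →
    evalWord ιG (wordPrefix w j) = evalWord ιG (wordPrefix w k) → j = k

/-- `w` labels a simple cycle (based at `1`) in the Cayley graph of `G`: `w` is
non-empty, `w = 1` holds in `G`, and the initial vertices of the edges of the cycle
(i.e. the values of the proper prefixes of `w`) are pairwise distinct. -/
def IsSimpleCycleWordG (ιG : X → G) (w : Word X) : Prop :=
  w ≠ 1 ∧ evalWord ιG w = 1 ∧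
    ∀ j k : ℕ, j < (FreeMonoid.toList w).length → k < (FreeMonoid.toList w).length →
      evalWord ιG (wordPrefix w j) = evalWord ιG (wordPrefix w k) → j = k

/-- The defining relation of the Margolis-Meakin expansion `M(G,X)` as a quotient of
X̄*: two words are identified iff they span the same subgraph of the Cayley graph and
represent the same element of `G`. -/
def mmRel (ιG : X → G) : Word X → Word X → Prop := fun u v =>
  Gamma ιG u = Gamma ιG v ∧ evalWord ιG u = evalWord ιG v

/-- The generating pairs of the congruence ξ_G: two words labelling simple paths from
`1` to the same element of `G` are identified. -/
def spRel (ιG : X → G) : Word X → Word X → Prop := fun u v =>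
  IsSimplePathWordG ιG u ∧ IsSimplePathWordG ιG v ∧ evalWord ιG u = evalWord ιG v

/-- The defining relations of `M_sF(G,X) = M(G,X)/ξ_G` as a quotient of X̄*. -/
def msfRel (ιG : X → G) : Word X → Word X → Prop := fun u v =>
  mmRel ιG u v ∨ spRel ιG u v

/-- `M_sF(G,X)`: the quotient of the Margolis-Meakin expansion `M(G,X)` by the
congruence ξ_G identifying, for each `g ∈ G`, all graphs spanned by simple paths
from `1` to `g`. -/
abbrev MsF (ιG : X → G) := InvPres (msfRel ιG)

end Graph

/-! ### Reduced words, cyclic words, linked words, invertible pieces -/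

/-- A word over X̄ is reduced if it has no factor of the form `x x⁻¹` or `x⁻¹ x`. -/
def ReducedWord (w : Word X) : Prop :=
  ∀ a : Letter X, ¬ ([a, invL a] <:+: FreeMonoid.toList w)

/-- A word over X̄ is cyclically reduced if it is reduced and its first and last
letters are not mutually inverse. -/
def CyclicallyReducedWord (w : Word X) : Prop :=
  ReducedWord w ∧ ∀ a : Letter X, (FreeMonoid.toList w).head? = some a →
    (FreeMonoid.toList w).getLast? ≠ some (invL a)

/-- A cyclically reduced word is cyclic with respect to `(G,X)` if it labels a simple
cycle in the Cayley graph of `G`. -/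
def IsCyclicWord {G : Type*} [Monoid G] [Inv G] (ιG : X → G) (w : Word X) : Prop :=
  CyclicallyReducedWord w ∧ IsSimpleCycleWordG ιG w

/-- `w'` is a cyclic conjugate of `w`. -/
def IsCyclicConjugate (w' w : Word X) : Prop := ∃ u v : Word X, w' = u * v ∧ v * u = w

/-- A word is linked with respect to `(M, ι)` if for every pair of adjacent letters
`a, b` of the word, `a⁻¹ a = b b⁻¹` holds in `M` (the letters are "matching"). -/
def Linked {M : Type*} [Monoid M] [Inv M] (ι : X → M) (w : Word X) : Prop :=
  ∀ (p q : Word X) (a b : Letter X),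
    w = p * (FreeMonoid.of a * (FreeMonoid.of b * q)) →
    (evalLetter ι a)⁻¹ * evalLetter ι a = evalLetter ι b * (evalLetter ι b)⁻¹

/-- `ws` is the factorisation of the word `w` into minimal invertible pieces with
respect to `(M, ι)`: `w` is the concatenation of the members of `ws`, each of which is
a non-empty word representing an invertible element of `M` such that no proper
non-empty prefix or suffix represents an invertible element of `M`. -/
def IsPieceDecomp {M : Type*} [Monoid M] [Inv M] (ι : X → M) (w : Word X)
    (ws : List (Word X)) : Prop :=
  ws.prod = w ∧ ∀ z ∈ ws, z ≠ 1 ∧ IsUnit (evalWord ι z) ∧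
    ∀ p s : Word X, z = p * s → p ≠ 1 → s ≠ 1 →
      ¬ IsUnit (evalWord ι p) ∧ ¬ IsUnit (evalWord ι s)


/-- Left translation of a set of edges of the Cayley graph by `g ∈ G`. -/
def translate {G : Type*} [Monoid G] (g : G) (Δ : Set (G × Letter X)) :
    Set (G × Letter X) :=
  (fun e => (g * e.1, e.2)) '' Δ

/-- A subgraph `Δ` of the Cayley graph of `G` is cyclic if for every edge `e` of `Δ`
it contains all edges of any simple cycle containing `e`. -/
def IsCyclicSubgraph {G : Type*} [Monoid G] [Inv G] (ιG : X → G)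
    (Δ : Set (G × Letter X)) : Prop :=
  ∀ (g : G) (w : Word X), IsSimpleCycleWordG ιG w →
    (translate g (Gamma ιG w) ∩ Δ).Nonempty → translate g (Gamma ιG w) ⊆ Δ

/-- The cyclic closure `Δ°` of a subgraph `Δ`: the smallest cyclic subgraph
containing `Δ`. -/
def cyclicClosure {G : Type*} [Monoid G] [Inv G] (ιG : X → G)
    (Δ : Set (G × Letter X)) : Set (G × Letter X) :=
  ⋂₀ {Θ | IsCyclicSubgraph ιG Θ ∧ Δ ⊆ Θ}

/-- A subgraph is connected and contains the vertex `1` iff each of its edges lies on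
a path starting at `1` and contained in the subgraph. -/
def ConnFromOne {G : Type*} [Monoid G] [Inv G] (ιG : X → G)
    (Δ : Set (G × Letter X)) : Prop :=
  ∀ e ∈ Δ, ∃ w : Word X, Gamma ιG w ⊆ Δ ∧ e ∈ Gamma ιG w

/-- A subgraph of the Cayley graph is connected if any two of its edges lie on a
common path contained in the subgraph. -/
def ConnSubgraph {G : Type*} [Monoid G] [Inv G] (ιG : X → G)
    (Δ : Set (G × Letter X)) : Prop :=
  ∀ e ∈ Δ, ∀ e' ∈ Δ, ∃ (g : G) (w : Word X),
    translate g (Gamma ιG w) ⊆ Δ ∧ e ∈ translate g (Gamma ιG w) ∧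
      e' ∈ translate g (Gamma ιG w)

/-- The two-element generating set `{a, b}` of the free abelian group of rank `2`
(realised as `Multiplicative (ℤ × ℤ) = Gp⟨a,b ∣ a⁻¹b⁻¹ab = 1⟩`):
`a = (1,0)` and `b = (0,1)`. -/
def ab2Gen : Bool → Multiplicative (ℤ × ℤ) := fun x =>
  Multiplicative.ofAdd (if x then ((1 : ℤ), (0 : ℤ)) else ((0 : ℤ), (1 : ℤ)))

/-! ### Evaluation of words in the free abelian group of rank two -/

/-- The free abelian group of rank two. -/
abbrev Z2 : Type := Multiplicative (ℤ × ℤ)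

/-- The word spelled by a list of letters. -/
abbrev wd (l : List (Letter Bool)) : Word Bool := FreeMonoid.ofList l

theorem evalWord_mul {M : Type*} [Monoid M] [Inv M] (ι : Bool → M) (u v : Word Bool) :
    evalWord ι (u * v) = evalWord ι u * evalWord ι v := by
  simp [evalWord, FreeMonoid.toList_mul]

theorem evalWord_of {M : Type*} [Monoid M] [Inv M] (ι : Bool → M) (a : Letter Bool) :
    evalWord ι (FreeMonoid.of a) = evalLetter ι a := by
  simp [evalWord, FreeMonoid.toList_of]

theorem evalWord_one {M : Type*} [Monoid M] [Inv M] (ι : Bool → M) :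
    evalWord ι (1 : Word Bool) = 1 := rfl

theorem evalWord_pow {M : Type*} [Monoid M] [Inv M] (ι : Bool → M) (u : Word Bool) (n : ℕ) :
    evalWord ι (u ^ n) = evalWord ι u ^ n := by
  induction n with
  | zero => simp [evalWord_one]
  | succ n ih => rw [pow_succ, pow_succ, evalWord_mul, ih]

theorem evalLetter_invL (a : Letter Bool) :
    evalLetter ab2Gen (invL a) = (evalLetter ab2Gen a)⁻¹ := by
  rcases a with ⟨x, _ | _⟩ <;> simp [evalLetter, invL]

theorem evalWord_wordInv (w : Word Bool) :
    evalWord ab2Gen (wordInv w) = (evalWord ab2Gen w)⁻¹ := by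
  induction w using FreeMonoid.inductionOn' with
  | one => simp [wordInv, evalWord]
  | of_mul a w ih =>
    rw [wordInv_mul, evalWord_mul, evalWord_mul, ih, mul_inv_rev, evalWord_of, ← evalLetter_invL,
      ← evalWord_of]
    rfl

theorem evalWord_surjective : Function.Surjective (evalWord ab2Gen) := by
  intro g
  obtain ⟨m, n⟩ := g
  -- `m.toNat` and `(-m).toNat` are the positive and the negative part of `m`.
  refine ⟨FreeMonoid.of (true, true) ^ m.toNat * FreeMonoid.of (true, false) ^ (-m).toNat *
    (FreeMonoid.of (false, true) ^ n.toNat * FreeMonoid.of (false, false) ^ (-n).toNat), ?_⟩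
  simp only [evalWord_mul, evalWord_pow, evalWord_of, evalLetter, ab2Gen]
  apply Multiplicative.toAdd.injective
  change _ = (m, n)
  simp only [← ofAdd_neg]
  simp [Prod.ext_iff]
  omega

/-! ### Simple paths and cycles in the grid -/

/-- The unit squares of the grid are simple cycles. -/
theorem square_simpleCycle (x y : Letter Bool) (h : x.1 ≠ y.1) :
    IsSimpleCycleWordG ab2Gen (wd [x, y, invL x, invL y]) := by
  refine ⟨List.cons_ne_nil _ _, ?_, ?_⟩
  · rcases x with ⟨_ | _, _ | _⟩ <;> rcases y with ⟨_ | _, _ | _⟩ <;>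
      first | exact absurd rfl h | decide
  · intro j k hj hk he
    have hj' : j < 4 := hj
    have hk' : k < 4 := hk
    rcases x with ⟨_ | _, _ | _⟩ <;> rcases y with ⟨_ | _, _ | _⟩ <;>
      first
      | exact absurd rfl h
      | (interval_cases j <;> interval_cases k <;>
          first | rfl | exact absurd he (by decide))

/-- Three sides of a unit square form a simple path. -/
theorem threeSides_simple (x y : Letter Bool) (h : x.1 ≠ y.1) :
    IsSimplePathWordG ab2Gen (wd [y, x, invL y]) := by
  intro j k hj hk he
  have hj' : j ≤ 3 := hj
  have hk' : k ≤ 3 := hk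
  rcases x with ⟨_ | _, _ | _⟩ <;> rcases y with ⟨_ | _, _ | _⟩ <;>
    first
    | exact absurd rfl h
    | (interval_cases j <;> interval_cases k <;>
        first | rfl | exact absurd he (by decide))

/-- Two adjacent sides of a unit square form a simple path. -/
theorem twoSides_simple (x y : Letter Bool) (h : x.1 ≠ y.1) :
    IsSimplePathWordG ab2Gen (wd [x, y]) := by
  intro j k hj hk he
  have hj' : j ≤ 2 := hj
  have hk' : k ≤ 2 := hk
  rcases x with ⟨_ | _, _ | _⟩ <;> rcases y with ⟨_ | _, _ | _⟩ <;>
    first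
    | exact absurd rfl h
    | (interval_cases j <;> interval_cases k <;>
        first | rfl | exact absurd he (by decide))

theorem letter_simple (x : Letter Bool) : IsSimplePathWordG ab2Gen (wd [x]) := by
  intro j k hj hk he
  have hj' : j ≤ 1 := hj
  have hk' : k ≤ 1 := hk
  rcases x with ⟨_ | _, _ | _⟩ <;>
    (interval_cases j <;> interval_cases k <;>
      first | rfl | exact absurd he (by decide))

/-! ### Cyclic subgraphs -/

/-- A cyclic subgraph containing an edge contains the unit squares on that edge; recorded here are
the two edges of such a square that are perpendicular to the given one. -/
theorem cyclic_square {Θ : Set (Z2 × Letter Bool)} (hΘ : IsCyclicSubgraph ab2Gen Θ)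
    {g : Z2} {x y : Letter Bool} (h : x.1 ≠ y.1) (hg : (g, x) ∈ Θ) :
    (g, y) ∈ Θ ∧ (g * evalLetter ab2Gen x, y) ∈ Θ := by
  have key := hΘ g _ (square_simpleCycle x y h)
    ⟨(g, x), ⟨(1, x), by simp [Gamma, pathEdges], by simp⟩, hg⟩
  constructor
  · apply key
    refine ⟨(1, y), ?_, by simp⟩
    simp [Gamma, pathEdges, evalLetter_invL, invL_invL]
  · apply key
    refine ⟨(evalLetter ab2Gen x, y), ?_, by simp⟩
    simp [Gamma, pathEdges]

theorem cyclic_all_at {Θ : Set (Z2 × Letter Bool)} (hΘ : IsCyclicSubgraph ab2Gen Θ)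
    {g : Z2} {x : Letter Bool} (hg : (g, x) ∈ Θ) (z : Letter Bool) : (g, z) ∈ Θ := by
  by_cases h : x.1 = z.1
  · have h1 : x.1 ≠ (!x.1, true).1 := by simp
    have h2 : (!x.1, true).1 ≠ z.1 := by simp [← h]
    exact (cyclic_square hΘ h2 (cyclic_square hΘ h1 hg).1).1
  · exact (cyclic_square hΘ h hg).1

theorem cyclic_eq_univ {Θ : Set (Z2 × Letter Bool)} (hΘ : IsCyclicSubgraph ab2Gen Θ)
    (hne : Θ.Nonempty) : Θ = Set.univ := by
  obtain ⟨⟨g, x⟩, hg⟩ := hne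
  have step : ∀ (w : Word Bool) (h : Z2), (∀ z, (h, z) ∈ Θ) →
      ∀ z, (h * evalWord ab2Gen w, z) ∈ Θ := by
    intro w
    induction w using FreeMonoid.inductionOn' with
    | one => intro h hh z; simpa [evalWord_one] using hh z
    | of_mul a w ih =>
      intro h hh z
      rw [evalWord_mul, evalWord_of, ← mul_assoc]
      refine ih _ (fun z => ?_) z
      have ha : a.1 ≠ (!a.1, true).1 := by simp
      exact cyclic_all_at hΘ (cyclic_square hΘ ha (hh a)).2 z
  refine Set.eq_univ_of_forall ?_
  rintro ⟨k, z⟩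
  obtain ⟨w, hw⟩ := evalWord_surjective (g⁻¹ * k)
  have := step w g (cyclic_all_at hΘ hg) z
  rwa [hw, mul_inv_cancel_left] at this

/-! ### The homomorphism onto the group with an adjoined identity -/

/-- The homomorphism from words to `WithOne Z2` sending every letter to its value. -/
def valHom : Word Bool →* WithOne Z2 :=
  FreeMonoid.lift (fun l => ((evalLetter ab2Gen l : Z2) : WithOne Z2))

theorem valHom_of_ne {w : Word Bool} (hw : w ≠ 1) :
    valHom w = ((evalWord ab2Gen w : Z2) : WithOne Z2) := by
  induction w using FreeMonoid.inductionOn' with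
  | one => exact absurd rfl hw
  | of_mul a w ih =>
    have ha : valHom (FreeMonoid.of a) = ((evalLetter ab2Gen a : Z2) : WithOne Z2) := by
      simp [valHom]
    rw [map_mul, ha, evalWord_mul, evalWord_of]
    by_cases h : w = 1
    · subst h; simp [evalWord_one]
    · rw [ih h, WithOne.coe_mul]

theorem valHom_eq {u v : Word Bool} (h1 : u = 1 ↔ v = 1)
    (h2 : evalWord ab2Gen u = evalWord ab2Gen v) : valHom u = valHom v := by
  by_cases h : u = 1
  · rw [h, h1.1 h]
  · rw [valHom_of_ne h, valHom_of_ne (fun hv => h (h1.2 hv)), h2]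

theorem wordInv_eq_one_iff (w : Word Bool) : wordInv w = 1 ↔ w = 1 := by
  constructor
  · intro h
    rw [← wordInv_wordInv w, h]; rfl
  · rintro rfl; rfl

theorem word_mul_eq_one_iff (u v : Word Bool) : u * v = 1 ↔ u = 1 ∧ v = 1 := by
  change (FreeMonoid.toList u ++ FreeMonoid.toList v = []) ↔ _
  rw [List.append_eq_nil_iff]; rfl

/-- The defining relations of `MsF` preserve the value in the group and never identify the empty
word with a non-empty one. -/
theorem rel_invariant {u v : Word Bool} (h : wagnerRel u v ∨ msfRel ab2Gen u v) :
    (u = 1 ↔ v = 1) ∧ evalWord ab2Gen u = evalWord ab2Gen v := by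
  rcases h with (⟨w, rfl, rfl⟩ | ⟨u, v, rfl, rfl⟩) | ⟨h1, h2⟩ | ⟨h1, h2, h3⟩
  · simp [wordInv_eq_one_iff, evalWord_mul, evalWord_wordInv]
  · simp [wordInv_eq_one_iff, evalWord_mul, evalWord_wordInv, and_comm]
  · refine ⟨?_, h2⟩
    have aux : ∀ w : Word Bool, w = 1 ↔ Gamma ab2Gen w = ∅ := by
      intro w
      induction w using FreeMonoid.casesOn with
      | one => exact ⟨fun _ => rfl, fun _ => rfl⟩
      | of_mul a w =>
        refine ⟨fun h => absurd h (List.cons_ne_nil _ _), fun h => absurd h ?_⟩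
        exact (Set.insert_nonempty _ _).ne_empty
    rw [aux, aux, h1]
  · refine ⟨?_, h3⟩
    -- A simple path of value `1` is empty, since its endpoints coincide.
    have aux : ∀ w : Word Bool, IsSimplePathWordG ab2Gen w → evalWord ab2Gen w = 1 → w = 1 := by
      intro w hw he
      have := hw 0 (FreeMonoid.toList w).length (Nat.zero_le _) le_rfl (by
        have h' : wordPrefix w (FreeMonoid.toList w).length = w := by
          simp [wordPrefix]
        rw [h', he]; rfl)
      exact List.length_eq_zero_iff.1 this.symm
    constructor
    · rintro rfl; exact aux v h2 (h3.symm.trans (evalWord_one _))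
    · rintro rfl; exact aux u h1 (h3.trans (evalWord_one _))

theorem presCon_le_ker : presCon (msfRel ab2Gen) ≤ Con.ker valHom := by
  refine Con.conGen_le.2 ?_
  intro u v h
  refine (Con.ker_rel _).2 ?_
  rcases h with h | h
  · exact valHom_eq (rel_invariant h).1 (rel_invariant h).2
  · obtain ⟨h1, h2⟩ := rel_invariant h
    rw [wordInv_eq_one_iff, wordInv_eq_one_iff] at h1
    rw [evalWord_wordInv, evalWord_wordInv, inv_inj] at h2
    exact valHom_eq h1 h2

/-- The canonical homomorphism from `MsF` to the group with an adjoined identity. -/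
def msfHom : MsF ab2Gen →* WithOne Z2 :=
  Con.lift (presCon (msfRel ab2Gen)) valHom presCon_le_ker

theorem msfHom_mk (w : Word Bool) : msfHom (mkW (msfRel ab2Gen) w) = valHom w := rfl

/-! ### Non-empty words of equal value agree in `MsF` -/

/-- The class in `MsF` of a word. -/
abbrev cls (w : Word Bool) : MsF ab2Gen := mkW (msfRel ab2Gen) w

/-- The class in `MsF` of a letter. -/
abbrev lt (x : Letter Bool) : MsF ab2Gen := cls (FreeMonoid.of x)

theorem cls_mul (u v : Word Bool) : cls (u * v) = cls u * cls v := rfl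

theorem cls_eq {u v : Word Bool} (h1 : IsSimplePathWordG ab2Gen u)
    (h2 : IsSimplePathWordG ab2Gen v) (h : evalWord ab2Gen u = evalWord ab2Gen v) :
    cls u = cls v :=
  Quotient.sound' (ConGen.Rel.of _ _ (Or.inl (Or.inr (Or.inr ⟨h1, h2, h⟩))))

theorem lt_mul_inv_mul (x : Letter Bool) : lt x * lt (invL x) * lt x = lt x :=
  InverseMonoid.mul_inv_mul (lt x)

theorem lt_idem_comm (x y : Letter Bool) :
    lt x * lt (invL x) * (lt y * lt (invL y)) = lt y * lt (invL y) * (lt x * lt (invL x)) :=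
  InverseMonoid.idem_mul_comm (lt x) (lt y)

theorem lt_conj {x y : Letter Bool} (h : x.1 ≠ y.1) : lt y * lt x * lt (invL y) = lt x := by
  have := cls_eq (threeSides_simple x y h) (letter_simple x) (by
    simp [evalWord, evalLetter_invL])
  exact this

theorem lt_comm {x y : Letter Bool} (h : x.1 ≠ y.1) : lt x * lt y = lt y * lt x := by
  have := cls_eq (twoSides_simple x y h) (twoSides_simple y x h.symm) (by
    simp [evalWord, mul_comm])
  exact this

theorem lt_absorb {x y : Letter Bool} (h : x.1 ≠ y.1) : lt y * lt (invL y) * lt x = lt x := by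
  have h1 := lt_conj h
  calc lt y * lt (invL y) * lt x = (lt y * lt (invL y) * lt y) * lt x * lt (invL y) := by
        conv_lhs => rw [← h1]
        simp only [mul_assoc]
    _ = lt x := by rw [lt_mul_inv_mul, h1]

theorem lt_idem_eq_of_ne {x y : Letter Bool} (h : x.1 ≠ y.1) :
    lt x * lt (invL x) = lt y * lt (invL y) := by
  calc lt x * lt (invL x) = lt y * lt (invL y) * (lt x * lt (invL x)) := by
        rw [← mul_assoc _ (lt x), lt_absorb h]
    _ = lt x * lt (invL x) * (lt y * lt (invL y)) := lt_idem_comm y x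
    _ = lt y * lt (invL y) := by rw [← mul_assoc _ (lt y), lt_absorb h.symm]

/-- The common idempotent `x x⁻¹` of all letters `x`. -/
def idem : MsF ab2Gen := lt (true, true) * lt (true, false)

theorem lt_mul_inv (x : Letter Bool) : lt x * lt (invL x) = idem := by
  by_cases h : x.1 = true
  · have h1 : x.1 ≠ (false, true).1 := by simp [h]
    rw [lt_idem_eq_of_ne h1]
    exact lt_idem_eq_of_ne (x := (false, true)) (y := (true, true)) (by simp)
  · exact lt_idem_eq_of_ne (y := (true, true)) h

theorem idem_mul_lt (x : Letter Bool) : idem * lt x = lt x := by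
  rw [← lt_mul_inv x, lt_mul_inv_mul]

theorem lt_inv_mul (x : Letter Bool) : lt (invL x) * lt x = idem := by
  have := lt_mul_inv (invL x)
  rwa [invL_invL] at this

theorem lt_mul_idem (x : Letter Bool) : lt x * idem = lt x := by
  rw [← lt_inv_mul x, ← mul_assoc, lt_mul_inv_mul]

/-- Left multiplication by a letter permutes the elements fixed by the idempotent `idem`, with
left multiplication by the inverse letter as inverse. -/
def perm (x : Letter Bool) : Equiv.Perm {s : MsF ab2Gen // idem * s = s} where
  toFun s := ⟨lt x * s.1, by rw [← mul_assoc, idem_mul_lt]⟩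
  invFun s := ⟨lt (invL x) * s.1, by rw [← mul_assoc, idem_mul_lt]⟩
  left_inv s := Subtype.ext (by
    change lt (invL x) * (lt x * s.1) = s.1
    rw [← mul_assoc, lt_inv_mul, s.2])
  right_inv s := Subtype.ext (by
    change lt x * (lt (invL x) * s.1) = s.1
    rw [← mul_assoc, lt_mul_inv, s.2])

theorem perm_inv (b : Bool) : perm (b, false) = (perm (b, true))⁻¹ :=
  Equiv.ext fun _ => rfl

theorem perm_comm : Commute (perm (true, true)) (perm (false, true)) := by
  ext s
  change lt (true, true) * (lt (false, true) * s.1) = lt (false, true) * (lt (true, true) * s.1)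
  rw [← mul_assoc, ← mul_assoc, lt_comm (by simp)]

/-- The action of the group element `(m, n)`, namely `perm a ^ m * perm b ^ n`. -/
def act (g : Z2) : Equiv.Perm {s : MsF ab2Gen // idem * s = s} :=
  perm (true, true) ^ (Multiplicative.toAdd g).1 * perm (false, true) ^ (Multiplicative.toAdd g).2

theorem act_mul (g h : Z2) : act (g * h) = act g * act h := by
  simp only [act, toAdd_mul, Prod.fst_add, Prod.snd_add, zpow_add]
  have := (perm_comm.zpow_zpow (Multiplicative.toAdd h).1 (Multiplicative.toAdd g).2).eq
  simp only [mul_assoc]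
  rw [← mul_assoc _ _ (perm (false, true) ^ (Multiplicative.toAdd h).2), this, mul_assoc]

theorem act_letter (x : Letter Bool) : act (evalLetter ab2Gen x) = perm x := by
  rcases x with ⟨_ | _, _ | _⟩ <;> simp [act, evalLetter, ab2Gen, perm_inv]

/-- Left multiplication by the class of a word depends, on the elements fixed by `idem`, only on
the value of the word. -/
theorem cls_mul_eq_act (w : Word Bool) (s : {s : MsF ab2Gen // idem * s = s}) :
    cls w * s.1 = (act (evalWord ab2Gen w) s).1 := by
  induction w using FreeMonoid.inductionOn' with
  | one =>
    have h : cls 1 = 1 := rfl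
    simp [h, evalWord_one, act]
  | of_mul a w ih =>
    rw [evalWord_mul, evalWord_of, act_mul, act_letter, cls_mul, mul_assoc, ih]
    rfl

theorem idem_mul_idem : idem * idem = idem := by
  change idem * (lt (true, true) * lt (true, false)) = idem
  rw [← mul_assoc, idem_mul_lt]
  rfl

theorem cls_mul_idem {w : Word Bool} (hw : w ≠ 1) : cls w * idem = cls w := by
  induction w using FreeMonoid.inductionOn' with
  | one => exact absurd rfl hw
  | of_mul a w ih =>
    rw [cls_mul, mul_assoc]
    by_cases h : w = 1
    · subst h
      have h1 : cls 1 = 1 := rfl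
      rw [h1, one_mul, mul_one, lt_mul_idem]
    · rw [ih h]

theorem cls_eq_of_eval {u v : Word Bool} (hu : u ≠ 1) (hv : v ≠ 1)
    (h : evalWord ab2Gen u = evalWord ab2Gen v) : cls u = cls v := by
  rw [← cls_mul_idem hu, ← cls_mul_idem hv]
  have h1 := cls_mul_eq_act u ⟨idem, idem_mul_idem⟩
  have h2 := cls_mul_eq_act v ⟨idem, idem_mul_idem⟩
  rw [h, ← h2] at h1
  exact h1

theorem msfHom_injective : Function.Injective msfHom := by
  intro p q
  refine Quotient.inductionOn₂' p q (fun u v => ?_)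
  change valHom u = valHom v → cls u = cls v
  intro h
  by_cases hu : u = 1 <;> by_cases hv : v = 1
  · rw [hu, hv]
  · rw [hu, map_one, valHom_of_ne hv] at h
    exact absurd h.symm WithOne.coe_ne_one
  · rw [hv, map_one, valHom_of_ne hu] at h
    exact absurd h WithOne.coe_ne_one
  · rw [valHom_of_ne hu, valHom_of_ne hv, WithOne.coe_inj] at h
    exact cls_eq_of_eval hu hv h

theorem msfHom_surjective : Function.Surjective msfHom := by
  intro g
  induction g using WithOne.cases_on
  · exact ⟨1, map_one _⟩
  · intro g
    obtain ⟨w, hw⟩ := evalWord_surjective ((evalLetter ab2Gen (true, true))⁻¹ * g)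
    -- The leading letter makes the word non-empty, also when `g = 1`.
    have hne : FreeMonoid.of (true, true) * w ≠ 1 := List.cons_ne_nil _ _
    refine ⟨cls (FreeMonoid.of (true, true) * w), ?_⟩
    rw [msfHom_mk, valHom_of_ne hne, evalWord_mul, evalWord_of, hw, mul_inv_cancel_left]

/-- Let `X = {a,b}` and `G = Gp⟨a,b ∣ a⁻¹b⁻¹ab = 1⟩` the free
abelian group of rank two.  Then the cyclic closure of any non-empty connected
subgraph of `Cay(G,X)` is the whole Cayley graph, and consequently
`M_sF(G,X) ≅ G ∪ {λ}`, the group `G` with an externally adjoined identity element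
`λ` (the pair `(∅,1)`, i.e. the class of the empty word): there is a monoid
isomorphism `M_sF(G,X) ≃* WithOne G` sending the class of every non-empty word `w`
to its value in `G` (and the class of the empty word to the new identity `λ`). -/
theorem statement_6 :
    (∀ Δ : Set (Multiplicative (ℤ × ℤ) × Letter Bool), Δ.Nonempty →
      ConnSubgraph ab2Gen Δ → cyclicClosure ab2Gen Δ = Set.univ) ∧
    ∃ φ : MsF ab2Gen ≃* WithOne (Multiplicative (ℤ × ℤ)),
      ∀ w : Word Bool, w ≠ 1 →
        φ (mkW (msfRel ab2Gen) w) =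
          (↑(evalWord ab2Gen w) : WithOne (Multiplicative (ℤ × ℤ))) := by
  refine ⟨?_, MulEquiv.ofBijective msfHom ⟨msfHom_injective, msfHom_surjective⟩, ?_⟩
  · intro Δ hne _
    refine Set.eq_univ_of_univ_subset (Set.subset_sInter ?_)
    rintro Θ ⟨hΘ, hsub⟩
    rw [cyclic_eq_univ hΘ (hne.mono hsub)]
  · intro w hw
    exact valHom_of_ne hw

end SFI
end

section
/- Let M = Inv⟨X | w = 1⟩ where w ∈ X̄* is a cyclically reduced word, and suppose w = puq (where p and/or q may be empty). Then u ≥ (qp)⁻¹ holds in M with respect to the natural partial order. Furthermore, unless u is a middle subword of some minimal invertible piece of w (i.e. unless some piece w_i factors as w_i = v'uv'' with v', v'' non-empty), the equality u = (qp)⁻¹ holds in M. -/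
/-! In an inverse monoid `a * b = 1` forces `a⁻¹ = b`. Thus `p * u * q = 1` gives `p⁻¹ = u * q`,
whence `(q * p)⁻¹ = p⁻¹ * q⁻¹ = u * (q * q⁻¹) ≤ u`. If moreover `u = u₁ * u₂` with `g = p * u₁`
invertible, then `p⁻¹ = u₁ * g⁻¹` and `q⁻¹ = g * u₂`, so `(q * p)⁻¹ = u₁ * u₂ = u`. Such a splitting
exists as soon as some boundary between consecutive pieces (or an end of `w`) lies within the closed
interval occupied by `u`; if no boundary does, `u` is strictly inside a single piece. -/

/-! Common framework: words over a doubled alphabet, inverse monoids,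
presentations of inverse monoids as quotients of the free monoid on letters,
the minimum group congruence, F-inverse and strongly F-inverse properties,
and the Margolis-Meakin / M_sF machinery. -/

namespace SFI

variable {X : Type*}

/-! ### Right invertibility in inverse monoids -/

section InverseMonoidLemmas

variable {M : Type*} [InverseMonoid M]

/-- A one-sided inverse is the inverse: the idempotents `a⁻¹ * a` and `b * b⁻¹` commute, and this
forces `b⁻¹ = a`. No invertibility of `a` is implied. -/
theorem inv_eq_of_mul_eq_one' {a b : M} (h : a * b = 1) : a⁻¹ = b := by
  have one_inv : (1 : M)⁻¹ = 1 := by simpa using InverseMonoid.mul_inv_mul (1 : M)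
  have h' : b⁻¹ * a⁻¹ = 1 := by rw [← InverseMonoid.mul_inv_rev, h, one_inv]
  have ha : a * a⁻¹ = 1 := by
    calc a * a⁻¹ = a * a⁻¹ * (a * b) := by rw [h, mul_one]
      _ = a * a⁻¹ * a * b := by simp only [mul_assoc]
      _ = 1 := by rw [InverseMonoid.mul_inv_mul, h]
  have hc := InverseMonoid.idem_mul_comm a⁻¹ b
  rw [InverseMonoid.inv_inv] at hc
  have hc2 : a⁻¹ * b⁻¹ = b * a := by
    calc a⁻¹ * b⁻¹ = a⁻¹ * (a * b) * b⁻¹ := by rw [h, mul_one]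
      _ = a⁻¹ * a * (b * b⁻¹) := by simp only [mul_assoc]
      _ = b * b⁻¹ * (a⁻¹ * a) := hc
      _ = b * (b⁻¹ * a⁻¹) * a := by simp only [mul_assoc]
      _ = b * a := by rw [h', mul_one]
  have hb : b⁻¹ = a := by
    calc b⁻¹ = a * a⁻¹ * b⁻¹ := by rw [ha, one_mul]
      _ = a * b * a := by rw [mul_assoc, hc2, mul_assoc]
      _ = a := by rw [h, one_mul]
  rw [← hb, InverseMonoid.inv_inv]

theorem natLe_mul_idem (a b : M) : natLe (a * (b * b⁻¹)) a := by
  have hb : b * b⁻¹ * (b * b⁻¹) = b * b⁻¹ := by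
    rw [← mul_assoc, InverseMonoid.mul_inv_mul]
  have hc := InverseMonoid.idem_mul_comm b a⁻¹
  rw [InverseMonoid.inv_inv] at hc
  unfold natLe
  rw [InverseMonoid.mul_inv_rev, InverseMonoid.mul_inv_rev, InverseMonoid.inv_inv]
  symm
  calc a * (b * b⁻¹) * (b * b⁻¹ * a⁻¹) * a
      = a * (b * b⁻¹ * (b * b⁻¹) * (a⁻¹ * a)) := by simp only [mul_assoc]
    _ = a * a⁻¹ * a * (b * b⁻¹) := by rw [hb, hc]; simp only [mul_assoc]
    _ = a * (b * b⁻¹) := by rw [InverseMonoid.mul_inv_mul]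

theorem natLe_of_mul_eq_one {p u q : M} (h : p * u * q = 1) : natLe (q * p)⁻¹ u := by
  rw [InverseMonoid.mul_inv_rev, inv_eq_of_mul_eq_one' (a := p) (b := u * q) (by rw [← mul_assoc, h]),
    mul_assoc]
  exact natLe_mul_idem u q

theorem eq_inv_of_isUnit {p u₁ u₂ q : M} (h : p * (u₁ * u₂) * q = 1) (hu : IsUnit (p * u₁)) :
    u₁ * u₂ = (q * p)⁻¹ := by
  obtain ⟨g, hg⟩ := hu
  have hp : p⁻¹ = u₁ * ↑g⁻¹ := inv_eq_of_mul_eq_one' (by rw [← mul_assoc, ← hg, Units.mul_inv])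
  have hq1 : ↑g * u₂ * q = 1 := by rw [hg]; simpa only [mul_assoc] using h
  have hq : q⁻¹ = ↑g * u₂ := by
    rw [← inv_eq_of_mul_eq_one' hq1, InverseMonoid.inv_inv]
  rw [InverseMonoid.mul_inv_rev, hp, hq, mul_assoc, Units.inv_mul_cancel_left]

end InverseMonoidLemmas

/-! ### Position of a factor relative to a factorisation -/

theorem freeMonoid_mul_eq_mul {α : Type*} {a b c d : FreeMonoid α} (h : a * b = c * d) :
    (∃ e, c = a * e ∧ b = e * d) ∨ (∃ e, a = c * e ∧ d = e * b) :=
  List.append_eq_append_iff.mp h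

/-- Either the boundary after some initial segment `l1` of the factorisation falls within (or at
an end of) the occurrence of `u`, or `u` lies strictly inside one factor. -/
theorem boundary_or_middle {α : Type*} (u q : FreeMonoid α) (ws : List (FreeMonoid α)) :
    ∀ p : FreeMonoid α, ws.prod = p * u * q →
    (∃ l1 l2 u₁ u₂, ws = l1 ++ l2 ∧ u = u₁ * u₂ ∧ l1.prod = p * u₁) ∨
    (∃ (l1 : List (FreeMonoid α)) (z : FreeMonoid α) (l2 : List (FreeMonoid α))
      (v' v'' : FreeMonoid α), ws = l1 ++ z :: l2 ∧ z = v' * u * v'' ∧ v' ≠ 1 ∧ v'' ≠ 1 ∧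
        p = l1.prod * v') := by
  induction ws with
  | nil =>
    intro p h
    have hp : p = 1 := by
      have h2 := congrArg FreeMonoid.toList h.symm
      simp only [List.prod_nil, FreeMonoid.toList_mul, FreeMonoid.toList_one,
        List.append_eq_nil_iff] at h2
      exact FreeMonoid.toList.injective h2.1.1
    exact Or.inl ⟨[], [], 1, u, rfl, by simp, by simp [hp]⟩
  | cons z t ih =>
    intro p h
    by_cases hp : p = 1
    · exact Or.inl ⟨[], z :: t, 1, u, rfl, by simp, by simp [hp]⟩
    rw [List.prod_cons, mul_assoc] at h
    rcases freeMonoid_mul_eq_mul h with ⟨a, rfl, h2⟩ | ⟨c, rfl, h2⟩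
    · rcases ih a (by rw [h2, mul_assoc]) with
        ⟨l1, l2, u₁, u₂, rfl, hu, hl⟩ | ⟨l1, y, l2, v', v'', rfl, hy, h1, h3, rfl⟩
      · exact Or.inl ⟨z :: l1, l2, u₁, u₂, rfl, hu, by rw [List.prod_cons, hl, mul_assoc]⟩
      · exact Or.inr ⟨z :: l1, y, l2, v', v'', rfl, hy, h1, h3, by
          rw [List.prod_cons, mul_assoc]⟩
    · rcases freeMonoid_mul_eq_mul h2 with ⟨d, rfl, -⟩ | ⟨d, rfl, -⟩
      · by_cases hd : d = 1
        · exact Or.inl ⟨[p * (u * d)], t, u, 1, rfl, by simp, by simp [hd]⟩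
        · exact Or.inr ⟨[], p * (u * d), t, p, d, rfl, by rw [mul_assoc], hp, hd, by simp⟩
      · exact Or.inl ⟨[p * c], t, c, d, rfl, rfl, by simp⟩

/-! ### Evaluation in the presented monoid -/

theorem mkW_mul (r : Word X → Word X → Prop) (u v : Word X) :
    mkW r (u * v) = mkW r u * mkW r v := rfl

theorem evalWord_genMap (r : Word X → Word X → Prop) (u : Word X) :
    evalWord (genMap r) u = mkW r u := by
  induction u using FreeMonoid.recOn with
  | one => rfl
  | of_mul a u ih =>
    have h1 : evalWord (genMap r) (FreeMonoid.of a * u)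
        = evalLetter (genMap r) a * evalWord (genMap r) u := by
      simp [evalWord]
    have h2 : evalLetter (genMap r) a = mkW r (FreeMonoid.of a) := by
      rcases a with ⟨x, _ | _⟩ <;> rfl
    rw [h1, h2, ih, mkW_mul]

theorem mkW_relator (w : Word X) : mkW (specialRel w) w = 1 :=
  Quotient.sound' (ConGen.Rel.of _ _ (Or.inl (Or.inr ⟨rfl, rfl⟩)))

theorem isUnit_mkW_prod (r : Word X → Word X → Prop) (l : List (Word X))
    (h : ∀ z ∈ l, IsUnit (mkW r z)) : IsUnit (mkW r l.prod) := by
  induction l with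
  | nil => exact isUnit_one
  | cons z t ih =>
    rw [List.prod_cons, mkW_mul]
    exact (h z (by simp)).mul (ih fun y hy => h y (by simp [hy]))

/-- Let `M = Inv⟨X ∣ w = 1⟩` with `w` cyclically reduced, and
suppose `w = puq`.  Then `u ≥ (qp)⁻¹` holds in `M` in the natural partial order.
Furthermore, unless `u` is a middle subword of some minimal invertible piece of `w`
(i.e. unless the piece containing this occurrence of `u` factors as `v'uv''` with
`v', v''` non-empty), the equality `u = (qp)⁻¹` holds in `M`. -/
theorem statement_16 {X : Type*} (w p u q : Word X) (hcr : CyclicallyReducedWord w)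
    (hw : w = p * u * q) (ws : List (Word X))
    (hws : IsPieceDecomp (genMap (specialRel w)) w ws) :
    natLe ((mkW (specialRel w) (q * p))⁻¹) (mkW (specialRel w) u) ∧
    ((¬ ∃ (l1 : List (Word X)) (z : Word X) (l2 : List (Word X)) (v' v'' : Word X),
        ws = l1 ++ z :: l2 ∧ z = v' * u * v'' ∧ v' ≠ 1 ∧ v'' ≠ 1 ∧
          p = l1.prod * v') →
      mkW (specialRel w) u = (mkW (specialRel w) (q * p))⁻¹) := by
  have h1 : mkW (specialRel w) p * mkW (specialRel w) u * mkW (specialRel w) q = 1 := by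
    rw [← mkW_mul, ← mkW_mul, ← hw, mkW_relator]
  refine ⟨natLe_of_mul_eq_one h1, fun hmid => ?_⟩
  rcases boundary_or_middle u q ws p (hws.1.trans hw) with
    ⟨l1, l2, u₁, u₂, hl, rfl, hp⟩ | h
  · have hunit : IsUnit (mkW (specialRel w) l1.prod) := by
      refine isUnit_mkW_prod _ _ fun z hz => ?_
      rw [← evalWord_genMap]
      exact (hws.2 z (by rw [hl]; exact List.mem_append_left _ hz)).2.1
    rw [hp] at hunit
    rw [mkW_mul] at h1 hunit ⊢
    exact eq_inv_of_isUnit h1 hunit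
  · exact absurd h hmid

end SFI
end

section
/- The one-relator special inverse monoid M = Inv⟨a,b,c,d | bcb⁻¹ad⁻¹a⁻¹ = 1⟩ is E-unitary but not F-inverse; in particular, in M there is an infinite ascending chain b⁻¹a ≤ cb⁻¹ad⁻¹ ≤ ⋯ ≤ cᵏb⁻¹ad⁻ᵏ ≤ ⋯ of elements of the σ-class of b⁻¹a, and this σ-class has no maximum element. -/
/-!
Write `t = a⁻¹ b`. In the group with the same presentation the relation says `t c t⁻¹ = d`, so the
group is an HNN extension with stable letter `t` of a free group containing `a`, `c`, `d`
(`Hnn18`, `val18`).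

*E-unitarity.* In the monoid the relator gives `a a⁻¹ = 1`, hence `b = a t`, and inserting the
relator between `b⁻¹` and `a` gives `b⁻¹ a ≤ c b⁻¹ a d⁻¹` (`bridge_natLe`). By induction
`t⁻¹ dⁿ t ≤ cⁿ` and, by symmetry, `t cⁿ t⁻¹ ≤ dⁿ` for all integers `n` (`pinch_le`). Free reduction
and the contraction of pinches therefore both move upwards in the natural order, so every element
lies below a reduced word of the HNN extension with the same value (`below_word`). If the value is
trivial, Britton's lemma makes this reduced word empty, so the element lies below `1` and is
idempotent (`natLe_one_of_val`).

*No maximum.* The inequality `bridge_natLe` also yields the ascending chain `cᵏ b⁻¹ a d⁻ᵏ`. For each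
`k` there is an automaton (`step18`) in which every generator acts by an injective map and the
relator acts as the identity (`reach18_congr`). In it `cᵏ b⁻¹ a d⁻ᵏ` labels a path from the start
of one ray to the start of another, whereas a potential function (`height18`) shows that any such
path has length at least `2 k`. An element above the whole chain would be represented by one word
labelling such a path for every `k`, which is impossible (`chain18_unbounded`). As the chain lies
in a single `σ`-class, that class has no maximum.
-/

/-! Common framework: words over a doubled alphabet, inverse monoids,
presentations of inverse monoids as quotients of the free monoid on letters,
the minimum group congruence, F-inverse and strongly F-inverse properties,
and the Margolis-Meakin / M_sF machinery. -/

namespace SFI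

variable {X : Type*}

/-- The relator word `b c b⁻¹ a d⁻¹ a⁻¹` over the alphabet `{a,b,c,d}`
(`a,b,c,d` being the generators `0,1,2,3`). -/
def relator18 : Word (Fin 4) :=
  FreeMonoid.ofList [((1 : Fin 4), true), ((2 : Fin 4), true), ((1 : Fin 4), false),
    ((0 : Fin 4), true), ((3 : Fin 4), false), ((0 : Fin 4), false)]

/-- The word `cᵏ b⁻¹ a d⁻ᵏ`. -/
def chain18 (k : ℕ) : Word (Fin 4) :=
  (FreeMonoid.of ((2 : Fin 4), true)) ^ k * FreeMonoid.of ((1 : Fin 4), false) *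
    FreeMonoid.of ((0 : Fin 4), true) * (FreeMonoid.of ((3 : Fin 4), false)) ^ k

/-! ### The natural partial order of an inverse monoid -/

section Order

variable {S : Type*} [InverseMonoid S]

theorem projection_inv (z : S) : (z * z⁻¹)⁻¹ = z * z⁻¹ := by
  rw [InverseMonoid.mul_inv_rev, InverseMonoid.inv_inv]

theorem projection_idem (z : S) : z * z⁻¹ * (z * z⁻¹) = z * z⁻¹ := by
  rw [← mul_assoc, InverseMonoid.mul_inv_mul]

theorem inv_one' : (1 : S)⁻¹ = 1 := by
  have := InverseMonoid.mul_inv_mul (1 : S)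
  simpa using this

/-- The natural order can be witnessed by any projection `z z⁻¹`, not only by `x x⁻¹`. -/
theorem natLe_of_eq {x y : S} (z : S) (h : x = z * z⁻¹ * y) : natLe x y := by
  unfold natLe
  have h1 : x * x⁻¹ * y = z * z⁻¹ * (y * y⁻¹) * (z * z⁻¹) * y := by
    rw [h, InverseMonoid.mul_inv_rev, projection_inv]
    simp only [mul_assoc]
  rw [h1, InverseMonoid.idem_mul_comm z y, mul_assoc (y * y⁻¹), projection_idem,
    ← InverseMonoid.idem_mul_comm z y, mul_assoc, InverseMonoid.mul_inv_mul, ← h]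

theorem natLe_rfl (x : S) : natLe x x := (InverseMonoid.mul_inv_mul x).symm

theorem natLe_trans {x y w : S} (h₁ : natLe x y) (h₂ : natLe y w) : natLe x w := by
  unfold natLe at h₁ h₂
  refine natLe_of_eq (x * x⁻¹ * y) ?_
  have : x * x⁻¹ * y * (x * x⁻¹ * y)⁻¹ = x * x⁻¹ * (y * y⁻¹) := by
    rw [InverseMonoid.mul_inv_rev, projection_inv,
      show x * x⁻¹ * y * (y⁻¹ * (x * x⁻¹)) = x * x⁻¹ * (y * y⁻¹ * (x * x⁻¹)) by
        simp only [mul_assoc],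
      ← InverseMonoid.idem_mul_comm x y, ← mul_assoc, projection_idem]
  rw [this, mul_assoc, ← h₂]
  exact h₁

theorem natLe_mul_right {x y : S} (h : natLe x y) (w : S) : natLe (x * w) (y * w) :=
  natLe_of_eq x (by rw [← mul_assoc, ← show x = x * x⁻¹ * y from h])

theorem natLe_mul_left {x y : S} (w : S) (h : natLe x y) : natLe (w * x) (w * y) := by
  refine natLe_of_eq (w * x) ?_
  -- the idempotents `x x⁻¹` and `w⁻¹ w` commute
  have key := InverseMonoid.idem_mul_comm x w⁻¹
  rw [InverseMonoid.inv_inv] at key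
  calc w * x = w * (x * x⁻¹ * y) := by rw [← show x = x * x⁻¹ * y from h]
    _ = w * (w⁻¹ * w * (x * x⁻¹)) * y := by
      rw [← mul_assoc w (w⁻¹ * w), ← mul_assoc w w⁻¹, InverseMonoid.mul_inv_mul]
      simp only [mul_assoc]
    _ = _ := by
      rw [← key, InverseMonoid.mul_inv_rev]
      simp only [mul_assoc]

theorem natLe_mul {x y z w : S} (h₁ : natLe x y) (h₂ : natLe z w) :
    natLe (x * z) (y * w) :=
  natLe_trans (natLe_mul_right h₁ z) (natLe_mul_left y h₂)

theorem natLe_inv {x y : S} (h : natLe x y) : natLe x⁻¹ y⁻¹ := by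
  have h' : x⁻¹ = y⁻¹ * (x * x⁻¹) := by
    conv_lhs => rw [show x = x * x⁻¹ * y from h, InverseMonoid.mul_inv_rev, projection_inv]
  have key := InverseMonoid.idem_mul_comm x y
  refine natLe_of_eq (y⁻¹ * x) ?_
  rw [InverseMonoid.mul_inv_rev, InverseMonoid.inv_inv]
  have hy : y⁻¹ * (y * y⁻¹) = y⁻¹ := by
    have := InverseMonoid.mul_inv_mul y⁻¹
    rwa [InverseMonoid.inv_inv, mul_assoc] at this
  calc
    x⁻¹ = y⁻¹ * (y * y⁻¹ * (x * x⁻¹)) := by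
      rw [← mul_assoc y⁻¹ (y * y⁻¹), hy]
      exact h'
    _ = y⁻¹ * (x * x⁻¹ * (y * y⁻¹)) := by rw [key]
    _ = _ := by
      simp only [mul_assoc]

theorem mul_inv_natLe_one (z : S) : natLe (z * z⁻¹) 1 := natLe_of_eq z (mul_one _).symm

theorem inv_mul_natLe_one (z : S) : natLe (z⁻¹ * z) 1 := by
  have := mul_inv_natLe_one z⁻¹
  rwa [InverseMonoid.inv_inv] at this

theorem idem_of_natLe_one {x : S} (h : natLe x 1) : x * x = x := by
  have h' : x = x * x⁻¹ := by rw [← mul_one (x * x⁻¹)]; exact h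
  rw [h', projection_idem]

/-- Elements comparable in the natural order have the same image in every group quotient. -/
theorem sigmaCon_of_natLe {x y : S} (h : natLe x y) : sigmaCon S x y := by
  intro c hc
  have hz : ((x * x⁻¹ : S) : c.Quotient) = 1 := by
    obtain ⟨u, hu⟩ := hc ((x * x⁻¹ : S) : c.Quotient)
    have hi : ((x * x⁻¹ : S) : c.Quotient) * ((x * x⁻¹ : S) : c.Quotient)
        = ((x * x⁻¹ : S) : c.Quotient) := by
      rw [← Con.coe_mul, projection_idem]
    rw [← hu] at hi ⊢
    exact Units.val_eq_one.2 (mul_eq_left.mp (Units.ext hi : u * u = u))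
  refine (Con.eq c).1 ?_
  have : ((x : S) : c.Quotient) = ((x * x⁻¹ * y : S) : c.Quotient) := by
    rw [← show x = x * x⁻¹ * y from h]
  rw [this, Con.coe_mul, hz, one_mul]

/-- An idempotent is trivial in every group quotient. -/
theorem sigmaCon_one_of_idem {m : S} (h : m * m = m) : sigmaCon S m 1 := by
  intro c hc
  refine (Con.eq c).1 ?_
  obtain ⟨u, hu⟩ := hc (m : c.Quotient)
  have hi : (m : c.Quotient) * (m : c.Quotient) = (m : c.Quotient) := by
    rw [← Con.coe_mul, h]
  rw [← hu] at hi ⊢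
  exact Units.val_eq_one.2 (mul_eq_left.mp (Units.ext hi : u * u = u))

/-- A homomorphism to a group that is compatible with inversion identifies `σ`-related
elements. -/
theorem eq_of_sigmaCon {H : Type*} [Group H] (θ : S →* H) (hθ : ∀ x, θ x⁻¹ = (θ x)⁻¹)
    {x y : S} (h : sigmaCon S x y) : θ x = θ y := by
  have hc : IsGroupCon (Con.ker θ) := by
    intro q
    induction q using Con.induction_on with
    | H x =>
      refine ⟨⟨(x : (Con.ker θ).Quotient), ((x⁻¹ : S) : (Con.ker θ).Quotient), ?_, ?_⟩, rfl⟩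
      · rw [← Con.coe_mul, ← Con.coe_one, Con.eq, Con.ker_rel]
        simp [hθ]
      · rw [← Con.coe_mul, ← Con.coe_one, Con.eq, Con.ker_rel]
        simp [hθ]
  exact h (Con.ker θ) hc

end Order

/-! ### Consequences of the defining relation in an inverse monoid -/

section Relation

variable {S : Type*} [InverseMonoid S]

/-- A right invertible element has its inverse as a right inverse. -/
theorem mul_inv_eq_one_of_mul {x y : S} (h : x * y = 1) : x * x⁻¹ = 1 := by
  rw [← mul_one (x * x⁻¹), ← h, ← mul_assoc, InverseMonoid.mul_inv_mul]

/-- The relation `b c b⁻¹ a d⁻¹ a⁻¹ = 1` is symmetric under exchanging `a` with `b` and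
`c` with `d`. -/
theorem relation_swap {a b c d : S} (h : b * c * b⁻¹ * a * d⁻¹ * a⁻¹ = 1) :
    a * d * a⁻¹ * b * c⁻¹ * b⁻¹ = 1 := by
  have := congrArg (fun x => x⁻¹) h
  simpa only [InverseMonoid.mul_inv_rev, InverseMonoid.inv_inv, inv_one', mul_assoc] using this

/-- Inserting the relator between `b⁻¹` and `a` and then deleting `b⁻¹ b` and `a⁻¹ a`. -/
theorem bridge_natLe {a b c d : S} (h : b * c * b⁻¹ * a * d⁻¹ * a⁻¹ = 1) :
    natLe (b⁻¹ * a) (c * (b⁻¹ * a) * d⁻¹) := by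
  have h1 : b⁻¹ * a = (b⁻¹ * b) * (c * (b⁻¹ * a) * d⁻¹) * (a⁻¹ * a) := by
    conv_lhs => rw [← mul_one b⁻¹, ← h]
    simp only [mul_assoc]
  have h2 := natLe_mul (natLe_mul_right (inv_mul_natLe_one b) (c * (b⁻¹ * a) * d⁻¹))
    (inv_mul_natLe_one a)
  rwa [← h1, one_mul, mul_one] at h2

theorem bridge_mul_natLe {a b c d : S} (h : b * c * b⁻¹ * a * d⁻¹ * a⁻¹ = 1) :
    natLe (b⁻¹ * a * d) (c * (b⁻¹ * a)) := by
  have h1 := natLe_mul_right (bridge_natLe h) d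
  have h2 := natLe_mul_left (c * (b⁻¹ * a)) (inv_mul_natLe_one d)
  rw [mul_one, ← mul_assoc] at h2
  exact natLe_trans h1 h2

theorem bridge_pow_natLe {a b c d : S} (h : b * c * b⁻¹ * a * d⁻¹ * a⁻¹ = 1) (n : ℕ) :
    natLe (b⁻¹ * a * d ^ n) (c ^ n * (b⁻¹ * a)) := by
  induction n with
  | zero => simpa using natLe_rfl _
  | succ n ih =>
    have h1 := natLe_mul_right ih d
    have h2 := natLe_mul_left (c ^ n) (bridge_mul_natLe h)
    rw [pow_succ, pow_succ, ← mul_assoc]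
    refine natLe_trans h1 ?_
    simpa only [mul_assoc] using h2

theorem conj_pow_natLe {a b c d : S} (h : b * c * b⁻¹ * a * d⁻¹ * a⁻¹ = 1) (n : ℕ) :
    natLe (b⁻¹ * a * d ^ n * (b⁻¹ * a)⁻¹) (c ^ n) := by
  have h1 := natLe_mul_right (bridge_pow_natLe h n) (b⁻¹ * a)⁻¹
  have h2 := natLe_mul_left (c ^ n) (mul_inv_natLe_one (b⁻¹ * a))
  rw [mul_one, ← mul_assoc] at h2
  exact natLe_trans h1 h2

end Relation

/-! ### The maximum group image as an HNN extension -/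

section Group

/-- The base of the HNN extension: the free group on the letters. The generator with index `1`
is not the image of `b`; it is a redundant free generator, kept so that a word of the base group
is literally a word over the alphabet of `relator18`. -/
abbrev Base18 := FreeGroup (Fin 4)

/-- The automorphism of the base group exchanging the generators `c` and `d`. -/
def swap18 : Base18 ≃* Base18 := FreeGroup.freeGroupCongr (Equiv.swap 2 3)

/-- The cyclic subgroup generated by `c`. -/
abbrev subC : Subgroup Base18 := Subgroup.zpowers (FreeGroup.of 2)

/-- The cyclic subgroup generated by `d`, as the image of `subC` under `swap18`. -/
abbrev subD : Subgroup Base18 := subC.map (swap18 : Base18 →* Base18)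

/-- The isomorphism `cⁿ ↦ dⁿ` between the associated subgroups. -/
def iso18 : subC ≃* subD := swap18.subgroupMap subC

/-- The HNN extension of the base group with stable letter `t` and `t c t⁻¹ = d`. -/
abbrev Hnn18 := HNNExtension Base18 subC subD iso18

theorem swap18_zpow (n : ℤ) :
    swap18 (FreeGroup.of 2 ^ n) = (FreeGroup.of 3 ^ n : Base18) := by
  simp [swap18]

theorem t_mul_c (n : ℤ) :
    (HNNExtension.t * HNNExtension.of (FreeGroup.of 2 ^ n) : Hnn18)
      = HNNExtension.of (FreeGroup.of 3 ^ n) * HNNExtension.t := by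
  have := HNNExtension.t_mul_of (φ := iso18) ⟨FreeGroup.of 2 ^ n, n, rfl⟩
  rw [← swap18_zpow]
  exact this

theorem mem_subD {g : Base18} (h : g ∈ subD) : ∃ n : ℤ, g = FreeGroup.of 3 ^ n := by
  obtain ⟨_, ⟨n, rfl⟩, rfl⟩ := h
  exact ⟨n, swap18_zpow n⟩

/-- The images of the generators in the HNN extension: `b` goes to `a t`, the other generators
to the corresponding generators of the base. -/
def letter18 (i : Fin 4) : Hnn18 :=
  if i = 1 then HNNExtension.of (FreeGroup.of 0) * HNNExtension.t
  else HNNExtension.of (FreeGroup.of i)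

/-- The value of a word in the HNN extension. -/
def val18 : Word (Fin 4) →* Hnn18 :=
  FreeMonoid.lift (fun x => if x.2 then letter18 x.1 else (letter18 x.1)⁻¹)

theorem val18_of (x : Letter (Fin 4)) :
    val18 (FreeMonoid.of x) = if x.2 then letter18 x.1 else (letter18 x.1)⁻¹ := by
  simp [val18]

theorem wordInv_of {X : Type*} (x : Letter X) :
    wordInv (FreeMonoid.of x) = FreeMonoid.of (invL x) := rfl

theorem val18_inv (w : Word (Fin 4)) : val18 (wordInv w) = (val18 w)⁻¹ := by
  induction w using FreeMonoid.inductionOn' with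
  | one =>
    rw [show wordInv (1 : Word (Fin 4)) = 1 from rfl]
    simp
  | of_mul x w ih =>
    rw [wordInv_mul, wordInv_of, map_mul, map_mul, ih, mul_inv_rev, val18_of, val18_of]
    obtain ⟨i, b⟩ := x
    cases b <;> simp [invL]

theorem relator18_eq : relator18 =
    FreeMonoid.of (1, true) * (FreeMonoid.of (2, true) * (FreeMonoid.of (1, false) *
      (FreeMonoid.of (0, true) * (FreeMonoid.of (3, false) * FreeMonoid.of (0, false))))) := rfl

theorem val18_relator : val18 relator18 = 1 := by
  have h := t_mul_c 1
  simp only [zpow_one] at h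
  simp only [relator18_eq, map_mul, val18_of, letter18]
  simp [mul_assoc, ← mul_assoc HNNExtension.t, h]

end Group

/-! ### Words with trivial value in the group are idempotent -/

section EUnitary

variable {S : Type*} [InverseMonoid S] (f : Word (Fin 4) →* S)

/-- The element represented by the reduced word of an element of the base group. -/
def sec18 (g : Base18) : S := f (FreeMonoid.ofList g.toWord)

/-- The element `t = a⁻¹ b` (exponent `1`) or `t⁻¹ = b⁻¹ a` (exponent `-1`). -/
def tau18 (e : ℤˣ) : S :=
  if e = 1 then f (FreeMonoid.of (0, false) * FreeMonoid.of (1, true))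
  else f (FreeMonoid.of (1, false) * FreeMonoid.of (0, true))

/-- The element represented by a reduced word of the HNN extension. -/
def ev18 (u : HNNExtension.NormalWord.ReducedWord Base18 subC subD) : S :=
  sec18 f u.head * (u.toList.map (fun x => tau18 f x.1 * sec18 f x.2)).prod

/-- `x` lies below the element represented by some reduced word with value `h`. -/
def Below18 (x : S) (h : Hnn18) : Prop :=
  ∃ u : HNNExtension.NormalWord.ReducedWord Base18 subC subD,
    natLe x (ev18 f u) ∧ h = u.prod iso18

theorem sec18_of_pow (i : Fin 4) (n : ℕ) :
    sec18 f (FreeGroup.of i ^ n) = f (FreeMonoid.of (i, true)) ^ n := by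
  unfold sec18
  rw [FreeGroup.toWord_of_pow, ← map_pow]
  congr 1
  induction n with
  | zero => rfl
  | succ n ih => rw [List.replicate_succ, FreeMonoid.ofList_cons, ih, pow_succ']

variable {f}

theorem f_of_inv (hinv : ∀ w, f (wordInv w) = (f w)⁻¹)
    (x : Letter (Fin 4)) : f (FreeMonoid.of (invL x)) = (f (FreeMonoid.of x))⁻¹ := by
  rw [← hinv, wordInv_of]

/-- Free reduction moves upwards in the natural order. -/
theorem natLe_of_red (hinv : ∀ w, f (wordInv w) = (f w)⁻¹)
    {L₁ L₂ : List (Letter (Fin 4))} (h : FreeGroup.Red L₁ L₂) :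
    natLe (f (FreeMonoid.ofList L₁)) (f (FreeMonoid.ofList L₂)) := by
  induction h with
  | refl => exact natLe_rfl _
  | tail _ h ih =>
    refine natLe_trans ih ?_
    obtain @⟨L₃, L₄, x, b⟩ := h
    rw [FreeMonoid.ofList_append, FreeMonoid.ofList_append, FreeMonoid.ofList_cons,
      FreeMonoid.ofList_cons, map_mul, map_mul, map_mul, map_mul]
    refine natLe_mul_left _ ?_
    rw [← mul_assoc]
    rw [show ((x, !b) : Letter (Fin 4)) = invL (x, b) from rfl, f_of_inv hinv]
    simpa only [one_mul] using natLe_mul_right (mul_inv_natLe_one (f (FreeMonoid.of (x, b)))) _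

theorem sec18_mul (hinv : ∀ w, f (wordInv w) = (f w)⁻¹)
    (g h : Base18) : natLe (sec18 f g * sec18 f h) (sec18 f (g * h)) := by
  unfold sec18
  rw [← map_mul, ← FreeMonoid.ofList_append, FreeGroup.toWord_mul]
  exact natLe_of_red hinv FreeGroup.reduce.red

theorem sec18_inv (hinv : ∀ w, f (wordInv w) = (f w)⁻¹)
    (g : Base18) : sec18 f g⁻¹ = (sec18 f g)⁻¹ := by
  unfold sec18
  rw [← hinv, FreeGroup.toWord_inv]
  congr 1
  simp [wordInv, FreeGroup.invRev, List.map_reverse, invL]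

theorem tau18_neg (hinv : ∀ w, f (wordInv w) = (f w)⁻¹)
    (e : ℤˣ) : tau18 f (-e) = (tau18 f e)⁻¹ := by
  unfold tau18
  rcases Int.units_eq_one_or e with rfl | rfl
  · rw [if_neg (by decide), if_pos rfl, ← hinv]; rfl
  · rw [if_pos (by decide), if_neg (by decide), ← hinv]; rfl

theorem relation_eq (hinv : ∀ w, f (wordInv w) = (f w)⁻¹)
    (hrel : f relator18 = 1) : f (FreeMonoid.of (1, true)) * f (FreeMonoid.of (2, true)) *
    (f (FreeMonoid.of (1, true)))⁻¹ * f (FreeMonoid.of (0, true)) *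
    (f (FreeMonoid.of (3, true)))⁻¹ * (f (FreeMonoid.of (0, true)))⁻¹ = 1 := by
  rw [← hrel, relator18_eq]
  simp only [map_mul, ← f_of_inv hinv, mul_assoc]
  rfl

/-- `a a⁻¹ = 1`, because the inverse of the relator starts with `a`. -/
theorem a_mul_inv (hinv : ∀ w, f (wordInv w) = (f w)⁻¹)
    (hrel : f relator18 = 1) : f (FreeMonoid.of (0, true)) * (f (FreeMonoid.of (0, true)))⁻¹ = 1 := by
  have h := relation_swap (relation_eq hinv hrel)
  simp only [mul_assoc] at h
  exact mul_inv_eq_one_of_mul h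

/-- A pinch `t cⁿ t⁻¹` or `t⁻¹ dⁿ t` lies below the power `dⁿ`, resp. `cⁿ`, it equals in the
group. Negative exponents follow from positive ones by inverting the inequality. -/
theorem pinch_le (hinv : ∀ w, f (wordInv w) = (f w)⁻¹)
    (hrel : f relator18 = 1) (e : ℤˣ) (n : ℤ) :
    natLe (tau18 f e * sec18 f (FreeGroup.of (if e = 1 then 2 else 3) ^ n) * tau18 f (-e))
      (sec18 f (FreeGroup.of (if e = 1 then 3 else 2) ^ n)) := by
  have key : ∀ n : ℕ,
    natLe (tau18 f e * sec18 f (FreeGroup.of (if e = 1 then 2 else 3) ^ n) * tau18 f (-e))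
      (sec18 f (FreeGroup.of (if e = 1 then 3 else 2) ^ n)) := by
    intro n
    rw [tau18_neg hinv, sec18_of_pow, sec18_of_pow]
    have hab : tau18 f 1 = (f (FreeMonoid.of (0, true)))⁻¹ * f (FreeMonoid.of (1, true)) := by
      rw [← f_of_inv hinv, ← map_mul]; rfl
    have hba : tau18 f (-1) = (f (FreeMonoid.of (1, true)))⁻¹ * f (FreeMonoid.of (0, true)) := by
      rw [← f_of_inv hinv, ← map_mul]; rfl
    rcases Int.units_eq_one_or e with rfl | rfl
    · rw [if_pos rfl, if_pos rfl, hab]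
      exact conj_pow_natLe (relation_swap (relation_eq hinv hrel)) n
    · rw [if_neg (by decide), if_neg (by decide), hba]
      exact conj_pow_natLe (relation_eq hinv hrel) n
  obtain ⟨m, rfl | rfl⟩ := n.eq_nat_or_neg
  · simpa using key m
  · have := natLe_inv (key m)
    simpa only [InverseMonoid.mul_inv_rev, ← sec18_inv hinv, ← tau18_neg hinv, neg_neg,
      zpow_neg, zpow_natCast, mul_assoc] using this

/-- Left multiplication by an element of the base changes only the head of the reduced word. -/
theorem below_sec (hinv : ∀ w, f (wordInv w) = (f w)⁻¹)
    (g : Base18) {x : S} {h : Hnn18} (hx : Below18 f x h) :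
    Below18 f (sec18 f g * x) (HNNExtension.of g * h) := by
  obtain ⟨u, hu, rfl⟩ := hx
  refine ⟨⟨g * u.head, u.toList, u.chain⟩, natLe_trans (natLe_mul_left _ hu) ?_, ?_⟩
  · unfold ev18
    rw [← mul_assoc]
    exact natLe_mul_right (sec18_mul hinv _ _) _
  · simp [HNNExtension.NormalWord.ReducedWord.prod, mul_assoc]

/-- Left multiplication by `t` or `t⁻¹` either lengthens the reduced word or creates a pinch,
which is contracted upwards. -/
theorem below_tau (hinv : ∀ w, f (wordInv w) = (f w)⁻¹)
    (hrel : f relator18 = 1) (e : ℤˣ) {x : S} {h : Hnn18} (hx : Below18 f x h) :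
    Below18 f (tau18 f e * x) (HNNExtension.t ^ (e : ℤ) * h) := by
  obtain ⟨⟨g, l, hl⟩, hu, rfl⟩ := hx
  by_cases hc : (l.IsChain (fun a b => a.2 ∈ HNNExtension.toSubgroup subC subD a.1 → a.1 = b.1)
      ∧ ((e, g) :: l).IsChain
        (fun a b => a.2 ∈ HNNExtension.toSubgroup subC subD a.1 → a.1 = b.1))
  · refine ⟨⟨1, (e, g) :: l, hc.2⟩, natLe_trans (natLe_mul_left _ hu) ?_, ?_⟩
    · have h1 : sec18 f 1 = 1 := by
        unfold sec18
        rw [FreeGroup.toWord_one]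
        exact map_one f
      simp only [ev18, h1, List.map_cons, List.prod_cons, one_mul, mul_assoc]
      exact natLe_rfl _
    · simp [HNNExtension.NormalWord.ReducedWord.prod, mul_assoc]
  · -- the word `t ^ e * g * l` has a pinch at its beginning
    rcases l with _ | ⟨⟨e', g'⟩, l⟩
    · simp at hc
    have hg : g ∈ HNNExtension.toSubgroup subC subD e ∧ e ≠ e' := by
      by_contra hcon
      refine hc ⟨hl, List.isChain_cons_cons.2 ⟨fun hm => ?_, hl⟩⟩
      by_contra hne
      exact hcon ⟨hm, hne⟩
    obtain ⟨hg, hne⟩ := hg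
    have he' : e' = -e := by
      rcases Int.units_eq_one_or e with rfl | rfl <;>
        rcases Int.units_eq_one_or e' with rfl | rfl <;> simp_all
    subst he'
    obtain ⟨n, rfl⟩ : ∃ n : ℤ, g = FreeGroup.of (if e = 1 then 2 else 3) ^ n := by
      rcases Int.units_eq_one_or e with rfl | rfl
      · obtain ⟨n, rfl⟩ := hg
        exact ⟨n, rfl⟩
      · exact mem_subD hg
    refine ⟨⟨FreeGroup.of (if e = 1 then 3 else 2) ^ n * g', l, (List.isChain_cons.1 hl).2⟩,
      natLe_trans (natLe_mul_left _ hu) ?_, ?_⟩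
    · simp only [ev18, List.map_cons, List.prod_cons]
      have h1 := natLe_mul_right (pinch_le hinv hrel e n)
        (sec18 f g' * (l.map (fun x => tau18 f x.1 * sec18 f x.2)).prod)
      have h2 := natLe_mul_right (sec18_mul hinv (FreeGroup.of (if e = 1 then 3 else 2) ^ n) g')
        (l.map (fun x => tau18 f x.1 * sec18 f x.2)).prod
      simp only [mul_assoc] at h1 h2 ⊢
      exact natLe_trans h1 h2
    · simp only [HNNExtension.NormalWord.ReducedWord.prod, List.map_cons, List.prod_cons, map_mul]
      rcases Int.units_eq_one_or e with rfl | rfl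
      · have := t_mul_c n
        rw [if_pos rfl, if_pos rfl, show ((1 : ℤˣ) : ℤ) = 1 from rfl,
          show ((-1 : ℤˣ) : ℤ) = -1 from rfl, zpow_one, zpow_neg, zpow_one, ← mul_assoc,
          ← mul_assoc, ← mul_assoc, this]
        simp [mul_assoc]
      · have h := t_mul_c n
        rw [if_neg (by decide), if_neg (by decide), neg_neg, show ((1 : ℤˣ) : ℤ) = 1 from rfl,
          show ((-1 : ℤˣ) : ℤ) = -1 from rfl, zpow_one, zpow_neg, zpow_one,
          inv_mul_eq_iff_eq_mul]
        simp only [← mul_assoc, h]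

/-- Every element of the monoid lies below a reduced word of the HNN extension with the same
value. -/
theorem below_word (hinv : ∀ w, f (wordInv w) = (f w)⁻¹)
    (hrel : f relator18 = 1) (w : Word (Fin 4)) : Below18 f (f w) (val18 w) := by
  induction w using FreeMonoid.inductionOn' with
  | one =>
    refine ⟨HNNExtension.NormalWord.ReducedWord.empty _ _ _, ?_, ?_⟩
    · have : ev18 f (HNNExtension.NormalWord.ReducedWord.empty _ _ _) = 1 := by
        simp only [ev18, HNNExtension.NormalWord.ReducedWord.empty_head, sec18,
          HNNExtension.NormalWord.ReducedWord.empty_toList, List.map_nil, List.prod_nil,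
          FreeGroup.toWord_one, mul_one]
        exact map_one f
      rw [this, map_one]
      exact natLe_rfl _
    · simp [HNNExtension.NormalWord.ReducedWord.prod]
  | of_mul x w ih =>
    rw [map_mul, map_mul, val18_of]
    have hs : ∀ i, sec18 f (FreeGroup.of i) = f (FreeMonoid.of (i, true)) := by
      intro i
      rw [sec18, FreeGroup.toWord_of]; rfl
    obtain ⟨i, b⟩ := x
    have hf : f (FreeMonoid.of (i, false)) = (f (FreeMonoid.of (i, true)))⁻¹ :=
      f_of_inv hinv (i, true)
    by_cases hi : i = 1
    · subst hi
      -- `b = a t` holds in the monoid because `a a⁻¹ = 1`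
      have hb : f (FreeMonoid.of (1, true)) = sec18 f (FreeGroup.of 0) * tau18 f 1 := by
        rw [hs, tau18, if_pos rfl, map_mul, ← mul_assoc]
        rw [show ((0, false) : Letter (Fin 4)) = invL (0, true) from rfl, f_of_inv hinv,
          a_mul_inv hinv hrel, one_mul]
      cases b
      · have h := below_tau hinv hrel (-1) (below_sec hinv (FreeGroup.of 0)⁻¹ ih)
        rw [hf, hb, InverseMonoid.mul_inv_rev, ← tau18_neg hinv, ← sec18_inv hinv]
        simpa [letter18, mul_assoc] using h
      · have h := below_sec hinv (FreeGroup.of 0) (below_tau hinv hrel 1 ih)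
        rw [hb]
        simpa [letter18, mul_assoc] using h
    · cases b
      · have h := below_sec hinv (FreeGroup.of i)⁻¹ ih
        rw [hf, ← hs, ← sec18_inv hinv]
        simpa [letter18, hi] using h
      · have h := below_sec hinv (FreeGroup.of i) ih
        rw [← hs]
        simpa [letter18, hi] using h

/-- A word with trivial value lies below `1`: by Britton's lemma, the reduced word above it is
empty. -/
theorem natLe_one_of_val (hinv : ∀ w, f (wordInv w) = (f w)⁻¹)
    (hrel : f relator18 = 1) {w : Word (Fin 4)} (hw : val18 w = 1) : natLe (f w) 1 := by
  obtain ⟨⟨g, l, hl⟩, hu, h⟩ := below_word hinv hrel w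
  rw [hw] at h
  have hnil := HNNExtension.ReducedWord.toList_eq_nil_of_mem_of_range iso18 ⟨g, l, hl⟩
    ⟨1, by rw [← h, map_one]⟩
  simp only at hnil
  subst hnil
  have hg : g = 1 := by
    refine HNNExtension.of_injective iso18 ?_
    simpa [HNNExtension.NormalWord.ReducedWord.prod] using h.symm
  subst hg
  have h1 : ev18 f ⟨1, [], hl⟩ = 1 := by
    simp only [ev18, sec18, List.map_nil, List.prod_nil, FreeGroup.toWord_one, mul_one]
    exact map_one f
  rwa [h1] at hu

end EUnitary

/-! ### A family of automata separating the rays -/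

section Automaton

/-- The base vertices of the automaton: the vertices `C i` and `D i` of two rays, and the
midpoints `m i` of the bridges between them. -/
inductive Vert18 : Type
  | C (i : ℕ) : Vert18
  | D (i : ℕ) : Vert18
  | m (i : ℕ) : Vert18

open Vert18

/-- The transition of the generator with index `i` in the automaton with parameter `k`. Its states
are pairs of a base vertex and a level; the rays and midpoints live on level `0`. The midpoint
`m i` is joined by `b` to `C (i + k)` and by `a` to `D (i + k)`, while `c` and `d` move along the
rays. Everywhere else `a` and `b` raise the level and `c` and `d` do nothing. -/
def step18 (k : ℕ) (i : Fin 4) : Vert18 × ℕ → Vert18 × ℕ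
  | (m j, 0) => if i = 1 then (C (j + k), 0) else if i = 0 then (D (j + k), 0) else (m j, 0)
  | (C j, 0) => if i = 2 then (C (j + 1), 0) else if i = 3 then (C j, 0) else (C j, 1)
  | (D j, 0) => if i = 3 then (D (j + 1), 0) else if i = 2 then (D j, 0) else (D j, 1)
  | (v, n + 1) => if i = 0 ∨ i = 1 then (v, n + 2) else (v, n + 1)

/-- The map sending each midpoint to the next one and fixing all other states. -/
def next18 : Vert18 × ℕ → Vert18 × ℕ
  | (m j, 0) => (m (j + 1), 0)
  | p => p

theorem step18_injective (k : ℕ) (i : Fin 4) : Function.Injective (step18 k i) := by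
  rintro ⟨_ | _ | _, _ | _⟩ ⟨_ | _ | _, _ | _⟩ h <;> fin_cases i <;> simp_all [step18]

theorem step18_b (k : ℕ) (p : Vert18 × ℕ) :
    step18 k 2 (step18 k 1 p) = step18 k 1 (next18 p) := by
  rcases p with ⟨_ | _ | _, _ | _⟩ <;> simp [step18, next18]; omega

theorem step18_a (k : ℕ) (p : Vert18 × ℕ) :
    step18 k 3 (step18 k 0 p) = step18 k 0 (next18 p) := by
  rcases p with ⟨_ | _ | _, _ | _⟩ <;> simp [step18, next18]; omega

/-- `Reach18 k L p q`: the list of letters `L` labels a path from `p` to `q` in the automaton. -/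
def Reach18 (k : ℕ) : List (Letter (Fin 4)) → Vert18 × ℕ → Vert18 × ℕ → Prop
  | [], p, q => p = q
  | (i, true) :: L, p, q => Reach18 k L (step18 k i p) q
  | (i, false) :: L, p, q => ∃ r, step18 k i r = p ∧ Reach18 k L r q

theorem reach18_append (k : ℕ) (L₁ L₂ : List (Letter (Fin 4))) (p q : Vert18 × ℕ) :
    Reach18 k (L₁ ++ L₂) p q ↔ ∃ r, Reach18 k L₁ p r ∧ Reach18 k L₂ r q := by
  induction L₁ generalizing p with
  | nil => simp [Reach18]
  | cons x L₁ ih =>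
    obtain ⟨i, _ | _⟩ := x
    · simp only [List.cons_append, Reach18, ih]
      grind
    · simp only [List.cons_append, Reach18, ih]

theorem reach18_inv (k : ℕ) (w : Word (Fin 4)) (p q : Vert18 × ℕ) :
    Reach18 k (wordInv w).toList p q ↔ Reach18 k w.toList q p := by
  induction w using FreeMonoid.inductionOn' generalizing p q with
  | one => exact eq_comm
  | of_mul x w ih =>
    rw [wordInv_mul, wordInv_of, FreeMonoid.toList_mul, FreeMonoid.toList_mul, reach18_append,
      reach18_append]
    obtain ⟨i, _ | _⟩ := x
    · simp only [ih, FreeMonoid.toList_of, invL, Reach18, Bool.not_false]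
      grind
    · simp only [ih, FreeMonoid.toList_of, invL, Reach18, Bool.not_true]
      grind

theorem reach18_right_unique (k : ℕ) (L : List (Letter (Fin 4))) {p q q' : Vert18 × ℕ}
    (h : Reach18 k L p q) (h' : Reach18 k L p q') : q = q' := by
  induction L generalizing p with
  | nil => exact h.symm.trans h'
  | cons x L ih =>
    obtain ⟨i, _ | _⟩ := x
    · obtain ⟨r, hr, h⟩ := h
      obtain ⟨r', hr', h'⟩ := h'
      obtain rfl := step18_injective k i (hr.trans hr'.symm)
      exact ih h h'
    · exact ih h h'

theorem reach18_left_unique (k : ℕ) (w : Word (Fin 4)) {p p' q : Vert18 × ℕ}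
    (h : Reach18 k w.toList p q) (h' : Reach18 k w.toList p' q) : p = p' :=
  reach18_right_unique k _ ((reach18_inv k w q p).2 h) ((reach18_inv k w q p').2 h')

theorem reach18_projection (k : ℕ) (w : Word (Fin 4)) (p q : Vert18 × ℕ) :
    Reach18 k (w * wordInv w).toList p q ↔ p = q ∧ ∃ r, Reach18 k w.toList p r := by
  rw [FreeMonoid.toList_mul, reach18_append]
  simp only [reach18_inv]
  constructor
  · rintro ⟨r, h₁, h₂⟩
    exact ⟨reach18_left_unique k w h₁ h₂, r, h₁⟩
  · rintro ⟨rfl, r, h⟩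
    exact ⟨r, h, h⟩

theorem reach18_wagner (k : ℕ) {u v : Word (Fin 4)} (h : wagnerRel u v) (p q : Vert18 × ℕ) :
    Reach18 k u.toList p q ↔ Reach18 k v.toList p q := by
  rcases h with ⟨w, rfl, rfl⟩ | ⟨u, v, rfl, rfl⟩
  · rw [FreeMonoid.toList_mul, reach18_append]
    simp only [reach18_projection]
    grind
  · rw [FreeMonoid.toList_mul, FreeMonoid.toList_mul (v * wordInv v), reach18_append,
      reach18_append]
    simp only [reach18_projection]
    grind

theorem reach18_relator (k : ℕ) (p q : Vert18 × ℕ) :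
    Reach18 k relator18.toList p q ↔ p = q := by
  show (∃ r, step18 k 1 r = step18 k 2 (step18 k 1 p) ∧
    ∃ s, step18 k 3 s = step18 k 0 r ∧ ∃ x, step18 k 0 x = s ∧ x = q) ↔ p = q
  rw [step18_b]
  constructor
  · rintro ⟨r, hr, s, hs, x, rfl, rfl⟩
    obtain rfl := step18_injective k 1 hr
    rw [← step18_a] at hs
    exact (step18_injective k 0 (step18_injective k 3 hs)).symm
  · rintro rfl
    exact ⟨_, rfl, _, step18_a k p, _, rfl, rfl⟩

/-- Words representing the same element of the monoid label the same paths. -/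
theorem reach18_congr (k : ℕ) {u v : Word (Fin 4)} (h : presCon (specialRel relator18) u v)
    (p q : Vert18 × ℕ) : Reach18 k u.toList p q ↔ Reach18 k v.toList p q := by
  have key : ∀ {u v : Word (Fin 4)}, wagnerRel u v ∨ specialRel relator18 u v →
      ∀ p q, Reach18 k u.toList p q ↔ Reach18 k v.toList p q := by
    rintro u v (h | ⟨rfl, rfl⟩) p q
    · exact reach18_wagner k h p q
    · exact reach18_relator k p q
  have h' : ConGen.Rel (fun u v => (wagnerRel u v ∨ specialRel relator18 u v) ∨
      (wagnerRel (wordInv u) (wordInv v) ∨ specialRel relator18 (wordInv u) (wordInv v))) u v := h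
  clear h
  induction h' generalizing p q with
  | of a b hab =>
    rcases hab with hab | hab
    · exact key hab p q
    · have := key hab q p
      rwa [reach18_inv, reach18_inv] at this
  | refl a => exact Iff.rfl
  | symm _ ih => exact (ih p q).symm
  | trans _ _ ih₁ ih₂ => exact (ih₁ p q).trans (ih₂ p q)
  | mul _ _ ih₁ ih₂ =>
    rw [FreeMonoid.toList_mul, FreeMonoid.toList_mul, reach18_append, reach18_append]
    simp only [ih₁, ih₂]

/-- Going up in the natural order preserves the existence of paths. -/
theorem reach18_of_natLe (k : ℕ) {u v : Word (Fin 4)}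
    (h : natLe (mkW (specialRel relator18) u) (mkW (specialRel relator18) v))
    {p q : Vert18 × ℕ} (hu : Reach18 k u.toList p q) : Reach18 k v.toList p q := by
  have h' : presCon (specialRel relator18) u (u * wordInv u * v) := Quotient.exact' h
  rw [reach18_congr k h', FreeMonoid.toList_mul, reach18_append] at hu
  simp only [reach18_projection] at hu
  obtain ⟨r, ⟨rfl, -⟩, h⟩ := hu
  exact h

/-- A potential growing from `0` at the start of one ray to `2 k` at the start of the other. -/
def height18 (k : ℕ) : Vert18 × ℕ → ℤ
  | (C i, _) => min i k
  | (m _, _) => k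
  | (D i, _) => 2 * k - min i k

theorem height18_step (k : ℕ) (i : Fin 4) (p : Vert18 × ℕ) :
    |height18 k (step18 k i p) - height18 k p| ≤ 1 := by
  rw [abs_le]
  rcases p with ⟨_ | _ | _, _ | _⟩ <;> fin_cases i <;> simp [step18, height18] <;> omega

theorem height18_reach (k : ℕ) (L : List (Letter (Fin 4))) {p q : Vert18 × ℕ}
    (h : Reach18 k L p q) : height18 k q - height18 k p ≤ L.length := by
  induction L generalizing p with
  | nil => obtain rfl : p = q := h; simp
  | cons x L ih =>
    rw [List.length_cons]
    push_cast
    obtain ⟨i, _ | _⟩ := x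
    · obtain ⟨r, rfl, h⟩ := h
      have := abs_le.1 (height18_step k i r)
      linarith [ih h]
    · have := abs_le.1 (height18_step k i p)
      linarith [ih h]

theorem reach18_c_pow (k n i : ℕ) :
    Reach18 k (FreeMonoid.of ((2 : Fin 4), true) ^ n).toList (C i, 0) (C (i + n), 0) := by
  induction n generalizing i with
  | zero => rfl
  | succ n ih =>
    rw [pow_succ', FreeMonoid.toList_mul, reach18_append]
    refine ⟨(C (i + 1), 0), rfl, ?_⟩
    rw [show i + (n + 1) = i + 1 + n by omega]
    exact ih (i + 1)

theorem reach18_d_pow (k n i : ℕ) :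
    Reach18 k (FreeMonoid.of ((3 : Fin 4), false) ^ n).toList (D (i + n), 0) (D i, 0) := by
  induction n with
  | zero => rfl
  | succ n ih =>
    rw [pow_succ', FreeMonoid.toList_mul, reach18_append]
    exact ⟨(D (i + n), 0), ⟨_, rfl, rfl⟩, ih⟩

theorem reach18_chain (k : ℕ) : Reach18 k (chain18 k).toList (C 0, 0) (D 0, 0) := by
  unfold chain18
  rw [FreeMonoid.toList_mul, reach18_append, FreeMonoid.toList_mul, FreeMonoid.toList_mul]
  refine ⟨(D (0 + k), 0), ?_, reach18_d_pow k k 0⟩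
  rw [reach18_append]
  refine ⟨(m 0, 0), ?_, rfl⟩
  rw [reach18_append]
  exact ⟨(C (0 + k), 0), reach18_c_pow k k 0, (m 0, 0), rfl, rfl⟩

/-- No element lies above all members of the chain: a word representing it would label paths
of bounded length joining the two rays in every automaton. -/
theorem chain18_unbounded (x : InvPres (specialRel relator18))
    (h : ∀ k, natLe (mkW (specialRel relator18) (chain18 k)) x) : False := by
  induction x using Quotient.inductionOn' with
  | h w =>
    have hr := reach18_of_natLe _ (h (w.toList.length + 1)) (reach18_chain _)
    have := height18_reach _ _ hr
    simp only [height18] at this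
    push_cast at this
    omega

end Automaton

/-! ### The monoid -/

section Monoid

/-- The quotient map from words onto the monoid. -/
def proj18 : Word (Fin 4) →* InvPres (specialRel relator18) where
  toFun := mkW _
  map_one' := rfl
  map_mul' _ _ := rfl

theorem proj18_inv (w : Word (Fin 4)) : proj18 (wordInv w) = (proj18 w)⁻¹ := rfl

theorem proj18_relator : proj18 relator18 = 1 :=
  Quotient.sound' (ConGen.Rel.of _ _ (Or.inl (Or.inr ⟨rfl, rfl⟩)))

theorem val18_congr {u v : Word (Fin 4)} (h : presCon (specialRel relator18) u v) :
    val18 u = val18 v := by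
  have key : ∀ {u v : Word (Fin 4)}, wagnerRel u v ∨ specialRel relator18 u v →
      val18 u = val18 v := by
    rintro u v ((⟨w, rfl, rfl⟩ | ⟨u, v, rfl, rfl⟩) | ⟨rfl, rfl⟩)
    · simp [val18_inv]
    · simp [val18_inv]
    · rw [val18_relator, map_one]
  have hle : presCon (specialRel relator18) ≤ Con.ker val18 := by
    refine Con.conGen_le.2 ?_
    rintro u v (h | h)
    · exact key h
    · have := key h
      rw [val18_inv, val18_inv] at this
      exact inv_injective this
  exact hle h

/-- The homomorphism from the monoid to the HNN extension. -/
def group18 : InvPres (specialRel relator18) →* Hnn18 where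
  toFun := Quotient.lift val18 (fun _ _ h => val18_congr h)
  map_one' := map_one val18
  map_mul' x y := by
    refine Quotient.inductionOn₂' x y (fun u v => ?_)
    exact map_mul val18 u v

theorem group18_inv (x : InvPres (specialRel relator18)) : group18 x⁻¹ = (group18 x)⁻¹ := by
  refine Quotient.inductionOn' x (fun u => ?_)
  exact val18_inv u

theorem sigmaCon_one_iff (x : InvPres (specialRel relator18)) :
    sigmaCon (InvPres (specialRel relator18)) x 1 ↔ x * x = x := by
  refine ⟨fun h => ?_, sigmaCon_one_of_idem⟩
  have hx := eq_of_sigmaCon group18 group18_inv h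
  rw [map_one] at hx
  revert hx
  refine Quotient.inductionOn' x (fun u hu => ?_)
  exact idem_of_natLe_one (natLe_one_of_val proj18_inv proj18_relator hu)

theorem chain18_step (k : ℕ) : natLe (mkW (specialRel relator18) (chain18 k))
    (mkW (specialRel relator18) (chain18 (k + 1))) := by
  have h := natLe_mul_right (natLe_mul_left (proj18 (FreeMonoid.of (2, true)) ^ k)
    (bridge_natLe (relation_eq proj18_inv proj18_relator)))
    ((proj18 (FreeMonoid.of (3, true)))⁻¹ ^ k)
  have e : ∀ n, mkW (specialRel relator18) (chain18 n) = proj18 (FreeMonoid.of (2, true)) ^ n *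
      ((proj18 (FreeMonoid.of (1, true)))⁻¹ * proj18 (FreeMonoid.of (0, true))) *
      (proj18 (FreeMonoid.of (3, true)))⁻¹ ^ n := by
    intro n
    show proj18 (chain18 n) = _
    simp only [chain18, map_mul, map_pow, ← f_of_inv proj18_inv, mul_assoc]
    rfl
  rw [e, e, pow_succ, pow_succ']
  simpa only [mul_assoc] using h

theorem chain18_sigma (k : ℕ) : sigmaCon (InvPres (specialRel relator18))
    (mkW (specialRel relator18) (chain18 k)) (mkW (specialRel relator18) (chain18 0)) := by
  induction k with
  | zero => exact Con.refl _ _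
  | succ k ih => exact Con.trans _ (Con.symm _ (sigmaCon_of_natLe (chain18_step k))) ih

end Monoid

/-- The one-relator special inverse monoid
`M = Inv⟨a,b,c,d ∣ bcb⁻¹ad⁻¹a⁻¹ = 1⟩` is E-unitary (the σ-class of `1` consists
precisely of the idempotents) but not F-inverse; in particular the elements
`cᵏ b⁻¹ a d⁻ᵏ` form an infinite ascending chain in the σ-class of `b⁻¹a`, and this
σ-class has no maximum element. -/
theorem statement_18 :
    (∀ m : InvPres (specialRel relator18),
      sigmaCon (InvPres (specialRel relator18)) m 1 ↔ m * m = m) ∧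
    ¬ FInverse (InvPres (specialRel relator18)) ∧
    (∀ k : ℕ, sigmaCon (InvPres (specialRel relator18))
      (mkW (specialRel relator18) (chain18 k)) (mkW (specialRel relator18) (chain18 0))) ∧
    (∀ k : ℕ, natLe (mkW (specialRel relator18) (chain18 k))
      (mkW (specialRel relator18) (chain18 (k + 1)))) ∧
    ¬ ∃ m : InvPres (specialRel relator18),
        sigmaCon (InvPres (specialRel relator18)) m
          (mkW (specialRel relator18) (chain18 0)) ∧
        ∀ x : InvPres (specialRel relator18),
          sigmaCon (InvPres (specialRel relator18)) x
            (mkW (specialRel relator18) (chain18 0)) → natLe x m := by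
  refine ⟨sigmaCon_one_iff, fun hF => ?_, chain18_sigma, chain18_step, ?_⟩
  · obtain ⟨m, -, hm⟩ := hF (mkW (specialRel relator18) (chain18 0))
    exact chain18_unbounded m fun k => hm _ (chain18_sigma k)
  · rintro ⟨m, -, hm⟩
    exact chain18_unbounded m fun k => hm _ (chain18_sigma k)

end SFI
end
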